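/- Let γ₁ be a tamely Liouville irrational number, γ₂ a real number, and β an irrational number. Let ψ be an approximation function with ψ(q) = O((q · log q · (log log q)²)⁻¹) such that ∑_{q : ‖qβ − γ₂‖ ≥ (log q)⁻¹} ψ(q)/‖qβ − γ₂‖ = ∞. Then the set W(ψ,β,γ₁,γ₂) = {x ∈ [0,1] : ‖qx − γ₁‖·‖qβ − γ₂‖ < ψ(q) for infinitely many positive integers q} has Lebesgue measure one. -/

import Mathlib

open MeasureTheory Filter Real

/-- Distance from a real number to the nearest integer. -/
noncomputable def dnint (x : ℝ) : ℝ := |x - round x|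

/-- The inhomogeneous approximation set `W(ψ,γ)`. -/
noncomputable def W (ψ : ℕ → ℝ) (γ : ℝ) : Set ℝ :=
  {x ∈ Set.Icc (0:ℝ) 1 | {q : ℕ | 0 < q ∧ dnint (q * x - γ) < ψ q}.Infinite}

/-- `σ_γ(Q)`: the infimum of all `σ > 0` with `‖qγ‖ ≥ q^{-σ}` for all `2 ≤ q ≤ Q`. -/
noncomputable def sigmaExp (γ : ℝ) (Q : ℕ) : ℝ :=
  sInf {σ : ℝ | 0 < σ ∧ ∀ q : ℕ, 2 ≤ q → q ≤ Q → (q : ℝ) ^ (-σ) ≤ dnint (q * γ)}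

/-- `γ` is tamely Liouville if `σ_γ(Q) ≤ C (log₂ Q)^{1/4-ε}` for all `Q ≥ 2`. -/
def TamelyLiouville (γ : ℝ) : Prop :=
  ∃ ε > (0:ℝ), ∃ C > (0:ℝ), ∀ Q : ℕ, 2 ≤ Q →
    sigmaExp γ Q ≤ C * (Real.logb 2 Q) ^ ((1:ℝ)/4 - ε)

/-!
After discarding small `‖qβ - γ₂‖`, the set in question contains the limsup set of the approximation
sets `{x | ‖qx - γ₁‖ < Ψ q}` with `Ψ q = ψ q / ‖qβ - γ₂‖ = O(1 / (q (log log q) ^ 2))` and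
`∑ Ψ q = ∞`. By Lebesgue's density theorem it is enough that the limsup set fills a fixed proportion
of every short interval, which the Chung–Erdős inequality reduces to independence on average of the
approximation sets inside that interval.

When `r` exceeds `q ^ 2`, the gaps between the components of the second set are so much shorter than
those of the first that counting suffices. Otherwise `log log q` and `log log r` nearly agree, and
with `d = gcd (q, r)` the two sets overlap more than they should only if
`‖((r - q) / d) γ₁‖ < (r Ψ q + q Ψ r) / d`. Since `γ₁` is not too well approximable, these
resonances are sparse enough to be summed, once `Ψ` has been restricted to integers `q` with few
divisors and truncated so that its sum over each range where `log log q` is nearly constant is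
bounded; both modifications preserve the divergence of `∑ Ψ q`.
-/

section NearestInteger

lemma dnint_nonneg (x : ℝ) : 0 ≤ dnint x := abs_nonneg _

lemma dnint_le_abs_sub (x : ℝ) (n : ℤ) : dnint x ≤ |x - n| := round_le x n

lemma dnint_lt_iff {x t : ℝ} : dnint x < t ↔ ∃ n : ℤ, |x - n| < t :=
  ⟨fun h => ⟨round x, h⟩, fun ⟨n, h⟩ => (dnint_le_abs_sub x n).trans_lt h⟩

lemma dnint_pos {x : ℝ} (hx : Irrational x) : 0 < dnint x :=
  abs_pos.2 (sub_ne_zero.2 (hx.ne_int _))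

end NearestInteger

section Diophantine

/-- `γ` is quasi-polynomially Diophantine if `‖m γ‖ ≥ exp (-(log m) ^ O(1))`. This weakening of
tame Liouvilleness is the only information on `γ` that the argument uses; `Nat.size m`, the number
of binary digits of `m`, plays the role of `log₂ m`. -/
def QuasipolyDiophantine (γ : ℝ) : Prop :=
  ∃ K A : ℕ, ∀ m : ℕ, 0 < m → (1 / 2 : ℝ) ^ (K * m.size ^ A) ≤ dnint (m * γ)

lemma logb_two_le_size (n : ℕ) : Real.logb 2 n ≤ n.size := by
  rcases n.eq_zero_or_pos with rfl | hn
  · simp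
  · rw [Real.logb_le_iff_le_rpow one_lt_two (by exact_mod_cast hn), Real.rpow_natCast]
    exact_mod_cast (Nat.lt_size_self n).le

lemma exists_pow_neg_le_dnint {γ : ℝ} (hγ : Irrational γ) (Q : ℕ) :
    ∃ σ > (0 : ℝ), ∀ q : ℕ, 2 ≤ q → q ≤ Q → (q : ℝ) ^ (-σ) ≤ dnint (q * γ) := by
  have hlarge : ∀ᶠ σ : ℝ in atTop, ∀ q ∈ Finset.Icc 2 Q, (q : ℝ) ^ (-σ) ≤ dnint (q * γ) := by
    rw [Filter.eventually_all_finset]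
    intro q hq
    have hq2 : 2 ≤ q := (Finset.mem_Icc.1 hq).1
    have hq1 : (1 : ℝ) < q := by exact_mod_cast hq2
    have hlim : Tendsto (fun σ : ℝ => (q : ℝ) ^ (-σ)) atTop (nhds 0) :=
      (tendsto_rpow_atBot_of_base_gt_one (q : ℝ) hq1).comp tendsto_neg_atTop_atBot
    exact hlim.eventually_le_const (dnint_pos (hγ.natCast_mul (by omega)))
  obtain ⟨σ, hσ, hσ0⟩ := (hlarge.and (eventually_gt_atTop 0)).exists
  exact ⟨σ, hσ0, fun q h2 hQ => hσ q (Finset.mem_Icc.2 ⟨h2, hQ⟩)⟩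

lemma TamelyLiouville.exists_exponent_le {γ : ℝ} (ht : TamelyLiouville γ) (hγ : Irrational γ) :
    ∃ C > (0 : ℝ), ∀ m : ℕ, 2 ≤ m → ∃ σ ≤ C * (m.size : ℝ), (m : ℝ) ^ (-σ) ≤ dnint (m * γ) := by
  obtain ⟨ε, hε, C, hC, h⟩ := ht
  refine ⟨C + 1, by positivity, fun m hm => ?_⟩
  obtain ⟨σ, ⟨-, hσ⟩, hlt⟩ := exists_lt_of_csInf_lt (exists_pow_neg_le_dnint hγ m) (lt_add_one _)
  refine ⟨σ, hlt.le.trans ?_, hσ m hm le_rfl⟩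
  have hlog : 1 ≤ Real.logb 2 m := by
    rw [Real.le_logb_iff_rpow_le one_lt_two (by positivity), Real.rpow_one]
    exact_mod_cast hm
  calc sigmaExp γ m + 1 ≤ C * Real.logb 2 m ^ ((1 : ℝ) / 4 - ε) + 1 := by gcongr; exact h m hm
    _ ≤ C * Real.logb 2 m ^ (1 : ℝ) + Real.logb 2 m := by
      gcongr
      linarith
    _ = (C + 1) * Real.logb 2 m := by rw [Real.rpow_one]; ring
    _ ≤ (C + 1) * m.size := by gcongr; exact logb_two_le_size m

lemma TamelyLiouville.quasipolyDiophantine {γ : ℝ} (ht : TamelyLiouville γ)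
    (hγ : Irrational γ) : QuasipolyDiophantine γ := by
  obtain ⟨C, hC, h⟩ := ht.exists_exponent_le hγ
  obtain ⟨k, hk⟩ := exists_pow_lt_of_lt_one (dnint_pos (hγ.natCast_mul one_ne_zero)) one_half_lt_one
  refine ⟨max ⌈C⌉₊ k, 2, fun m hm => ?_⟩
  rcases (Nat.succ_le_of_lt hm).eq_or_lt with rfl | hm2
  · refine (pow_le_pow_of_le_one (by norm_num) (by norm_num) ?_).trans hk.le
    simp
  · obtain ⟨σ, hσ, hle⟩ := h m hm2
    refine le_trans ?_ hle
    have hm1 : (1 : ℝ) ≤ m := by exact_mod_cast hm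
    have hK : C ≤ (max ⌈C⌉₊ k : ℕ) :=
      (Nat.le_ceil C).trans (by exact_mod_cast le_max_left _ _)
    calc (1 / 2 : ℝ) ^ (max ⌈C⌉₊ k * m.size ^ 2)
        = (2 : ℝ) ^ ((m.size : ℝ) * -((max ⌈C⌉₊ k : ℕ) * m.size)) := by
          rw [one_div, inv_pow, ← Real.rpow_natCast, ← Real.rpow_neg two_pos.le]
          congr 1
          push_cast
          ring
      _ = ((2 : ℝ) ^ m.size) ^ (-((max ⌈C⌉₊ k : ℕ) * m.size : ℝ)) := by
          rw [Real.rpow_mul two_pos.le, Real.rpow_natCast]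
      _ ≤ (m : ℝ) ^ (-((max ⌈C⌉₊ k : ℕ) * m.size : ℝ)) := by
          refine Real.rpow_le_rpow_of_nonpos (by positivity) ?_ (neg_nonpos.2 (by positivity))
          exact_mod_cast (Nat.lt_size_self m).le
      _ ≤ (m : ℝ) ^ (-σ) := by
          refine Real.rpow_le_rpow_of_exponent_le hm1 (neg_le_neg (hσ.trans ?_))
          gcongr

end Diophantine

section Counting

lemma card_le_of_dvd_sub {G : Finset ℤ} {x y : ℝ} (hxy : x ≤ y) {k : ℕ} (hk : 0 < k)
    (hG : ∀ z ∈ G, x ≤ z ∧ (z : ℝ) ≤ y) (hdvd : ∀ z ∈ G, ∀ w ∈ G, (k : ℤ) ∣ z - w) :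
    (G.card : ℝ) ≤ (y - x) / k + 1 := by
  have hlen : 0 ≤ (y - x) / k := div_nonneg (sub_nonneg.2 hxy) k.cast_nonneg
  rcases G.eq_empty_or_nonempty with rfl | hne
  · simpa using hlen.trans (le_add_of_nonneg_right zero_le_one)
  have hk' : (0 : ℝ) < k := by exact_mod_cast hk
  set z₀ := G.min' hne
  have hz₀ : z₀ ∈ G := G.min'_mem hne
  have hinj : Set.InjOn (fun z : ℤ => (z - z₀) / k) G := fun z hz w hw h => by
    linarith [Int.ediv_mul_cancel (hdvd z hz z₀ hz₀), Int.ediv_mul_cancel (hdvd w hw z₀ hz₀),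
      congrArg (· * (k : ℤ)) h]
  have hsub : G.image (fun z : ℤ => (z - z₀) / k) ⊆ Finset.Icc 0 ⌊(y - x) / k⌋ := by
    refine Finset.image_subset_iff.2 fun z hz => Finset.mem_Icc.2 ⟨?_, ?_⟩
    · exact Int.ediv_nonneg (sub_nonneg.2 (G.min'_le z hz)) k.cast_nonneg
    · have hmul : (((z - z₀) / k : ℤ) : ℝ) * k = z - z₀ := by
        exact_mod_cast Int.ediv_mul_cancel (hdvd z hz z₀ hz₀)
      rw [Int.le_floor, le_div_iff₀ hk', hmul]
      linarith [(hG z hz).2, (hG z₀ hz₀).1]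
  have hcard := Finset.card_le_card hsub
  rw [Finset.card_image_of_injOn hinj, Int.card_Icc, sub_zero] at hcard
  have htoNat : ((⌊(y - x) / k⌋ + 1).toNat : ℤ) = ⌊(y - x) / k⌋ + 1 :=
    Int.toNat_of_nonneg (by linarith [Int.floor_nonneg.2 hlen])
  calc (G.card : ℝ) ≤ ((⌊(y - x) / k⌋ + 1).toNat : ℤ) := by exact_mod_cast hcard
    _ = ⌊(y - x) / k⌋ + 1 := by rw [htoNat]; push_cast; rfl
    _ ≤ (y - x) / k + 1 := by gcongr; exact Int.floor_le _

lemma abs_mul_num_sub_round_mul_den_le {γ : ℝ} {ρ : ℚ} (hρ : |γ - ρ| ≤ 1 / (ρ.den : ℝ) ^ 2)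
    {u m : ℤ} (hmu : |(m : ℝ) - u| ≤ ρ.den) :
    |(((m - u) * ρ.num - round (m * γ) * ρ.den : ℤ) : ℝ) - -(u * γ * ρ.den)| ≤
      ρ.den * dnint (m * γ) + 1 := by
  have hs : (0 : ℝ) < ρ.den := by exact_mod_cast ρ.den_pos
  have hnum : (ρ : ℝ) * ρ.den = ρ.num := by exact_mod_cast ρ.mul_den_eq_num
  calc |(((m - u) * ρ.num - round (m * γ) * ρ.den : ℤ) : ℝ) - -(u * γ * ρ.den)|
      = |ρ.den * (m * γ - round (m * γ)) - (m - u) * (γ - ρ) * ρ.den| := by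
        push_cast
        rw [← hnum]
        ring_nf
    _ ≤ |ρ.den * (m * γ - round (m * γ))| + |(m - u) * (γ - ρ) * ρ.den| := abs_sub _ _
    _ = ρ.den * dnint (m * γ) + |(m : ℝ) - u| * |γ - ρ| * ρ.den := by
        rw [abs_mul, abs_mul, abs_mul, abs_of_pos hs, dnint]
    _ ≤ ρ.den * dnint (m * γ) + ρ.den * (1 / (ρ.den : ℝ) ^ 2) * ρ.den := by gcongr
    _ = ρ.den * dnint (m * γ) + 1 := by field_simp

-- With `ρ = p / s`, the integers `(m - u) p - s [m γ]` are pairwise distinct, even modulo `s`, and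
-- since `m γ ≈ m p / s` they lie in an interval of length `2 (s η + 1)`.
lemma card_block_le {γ : ℝ} {ρ : ℚ} (hρ : |γ - ρ| ≤ 1 / (ρ.den : ℝ) ^ 2) {u : ℤ} {η : ℝ}
    (hη : 0 ≤ η) {F : Finset ℤ} (hF : ∀ m ∈ F, u ≤ m ∧ m < u + ρ.den ∧ dnint (m * γ) < η) :
    (F.card : ℝ) ≤ 2 * ρ.den * η + 3 := by
  have hs : (0 : ℝ) < ρ.den := by exact_mod_cast ρ.den_pos
  set f : ℤ → ℤ := fun m => (m - u) * ρ.num - round (m * γ) * ρ.den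
  have hnear : ∀ m ∈ F, |(f m : ℝ) - -(u * γ * ρ.den)| ≤ ρ.den * η + 1 := by
    intro m hm
    obtain ⟨hum, hmu, hd⟩ := hF m hm
    have hum : (u : ℝ) ≤ m := by exact_mod_cast hum
    have hmu : (m : ℝ) < u + ρ.den := by exact_mod_cast hmu
    refine (abs_mul_num_sub_round_mul_den_le hρ (abs_le.2 ⟨?_, ?_⟩)).trans ?_
    · linarith
    · linarith
    · gcongr
  have hinj : Set.InjOn f F := by
    intro m hm m' hm' h
    have hdvd : (ρ.den : ℤ) ∣ (m - m') * ρ.num :=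
      ⟨round (m * γ) - round (m' * γ), by linear_combination h⟩
    have hlt : |m - m'| < ρ.den := by
      rw [abs_lt]
      constructor <;> linarith [hF m hm, hF m' hm']
    exact sub_eq_zero.1 (Int.eq_zero_of_abs_lt_dvd
      (ρ.isCoprime_num_den.symm.dvd_of_dvd_mul_right hdvd) hlt)
  have hcard := card_le_of_dvd_sub (G := F.image f) (k := 1)
    (x := -(u * γ * ρ.den) - (ρ.den * η + 1)) (y := -(u * γ * ρ.den) + (ρ.den * η + 1))
    (by linarith [mul_nonneg hs.le hη]) one_pos
    (Finset.forall_mem_image.2 fun m hm => by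
      have := abs_le.1 (hnear m hm)
      constructor <;> linarith)
    (by simp)
  rw [Finset.card_image_of_injOn hinj, Nat.cast_one, div_one] at hcard
  linarith

lemma sum_Icc_inv_le {a b : ℕ} (ha : 0 < a) (hab : a ≤ b) :
    ∑ j ∈ Finset.Icc a b, (j : ℝ)⁻¹ ≤ 1 + Real.log (b / a) := by
  have ha' : (0 : ℝ) < a := by exact_mod_cast ha
  induction b, hab using Nat.le_induction with
  | base => simpa [div_self ha'.ne'] using inv_le_one_of_one_le₀ (by exact_mod_cast ha)
  | succ b hb ih =>
    have hb' : (0 : ℝ) < b := ha'.trans_le (by exact_mod_cast hb)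
    have hlog : Real.log ((b + 1 : ℕ) / a) = Real.log ((b + 1) / b) + Real.log (b / a) := by
      rw [← Real.log_mul (by positivity) (by positivity)]
      congr 1
      push_cast
      field_simp
    have hstep : ((b + 1 : ℕ) : ℝ)⁻¹ ≤ Real.log ((b + 1) / b) :=
      calc ((b + 1 : ℕ) : ℝ)⁻¹ = 1 - (((b : ℝ) + 1) / b)⁻¹ := by push_cast; field_simp; ring
        _ ≤ Real.log ((b + 1) / b) := Real.one_sub_inv_le_log_of_pos (by positivity)
    rw [← Finset.insert_Icc_right_eq_Icc_add_one (by omega), Finset.sum_insert (by simp), hlog]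
    linarith

lemma card_filter_div_eq_le {γ : ℝ} {ρ : ℚ} (hρ : |γ - ρ| ≤ 1 / (ρ.den : ℝ) ^ 2) {N j : ℕ}
    (hj : 0 < j) {κ : ℝ} (hκ : 0 ≤ κ) {F : Finset ℕ}
    (hF : ∀ k ∈ F, dnint (((N : ℝ) - k) * γ) < κ * (N / k)) :
    ((F.filter fun k => k / ρ.den = j).card : ℝ) ≤ 2 * κ * N * (j : ℝ)⁻¹ + 3 := by
  have hinj : Set.InjOn (fun k : ℕ => (N : ℤ) - k) (F.filter fun k => k / ρ.den = j) :=
    fun a _ b _ h => by simpa using h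
  have hblock := card_block_le hρ (u := N - (j + 1) * ρ.den + 1) (η := κ * (N / (j * ρ.den)))
    (by positivity) (F := (F.filter fun k => k / ρ.den = j).image fun k : ℕ => (N : ℤ) - k)
    (Finset.forall_mem_image.2 fun k hk => by
      obtain ⟨hkF, hkj⟩ := Finset.mem_filter.1 hk
      have hlo : j * ρ.den ≤ k := hkj ▸ Nat.div_mul_le_self k ρ.den
      have hhi : k < (j + 1) * ρ.den := by
        rw [← hkj, Nat.add_one_mul]
        exact Nat.lt_div_mul_add ρ.den_pos
      zify at hlo hhi
      refine ⟨by linarith, by linarith, ?_⟩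
      push_cast
      refine (hF k hkF).trans_le ?_
      gcongr
      exact_mod_cast hlo)
  rw [Finset.card_image_of_injOn hinj] at hblock
  refine hblock.trans_eq ?_
  field_simp

lemma card_close_le {γ : ℝ} {ρ : ℚ} (hρ : |γ - ρ| ≤ 1 / (ρ.den : ℝ) ^ 2) {X N : ℕ} (hX : 0 < X)
    (hN : X * ρ.den ≤ N) {κ : ℝ} (hκ : 0 ≤ κ) {F : Finset ℕ}
    (hF : ∀ k ∈ F, k < N ∧ N ≤ k * X ∧ dnint (((N : ℝ) - k) * γ) < κ * (N / k)) :
    (F.card : ℝ) ≤ 2 * κ * N * (1 + Real.log (2 * X)) + 3 * (N / ρ.den) := by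
  have hs : 0 < ρ.den := ρ.den_pos
  have hs' : (0 : ℝ) < ρ.den := by exact_mod_cast hs
  set J₀ := N / (X * ρ.den) with hJ₀
  set J₁ := N / ρ.den
  have hJ₀pos : 0 < J₀ := Nat.div_pos hN (by positivity)
  have hJle : J₀ ≤ J₁ := Nat.div_le_div_left (Nat.le_mul_of_pos_left _ hX) hs
  have hJ₁N : (J₁ : ℝ) ≤ N / ρ.den := Nat.cast_div_le
  have hmaps : ∀ k ∈ F, k / ρ.den ∈ Finset.Icc J₀ J₁ := fun k hk => by
    obtain ⟨hkN, hNk, -⟩ := hF k hk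
    refine Finset.mem_Icc.2 ⟨?_, Nat.div_le_div_right hkN.le⟩
    rw [hJ₀, ← Nat.div_div_eq_div_mul]
    exact Nat.div_le_div_right (Nat.div_le_of_le_mul (by linarith [mul_comm k X]))
  have hharm : ∑ j ∈ Finset.Icc J₀ J₁, (j : ℝ)⁻¹ ≤ 1 + Real.log (2 * X) := by
    refine (sum_Icc_inv_le hJ₀pos hJle).trans ?_
    have hJ₀' : (0 : ℝ) < J₀ := by exact_mod_cast hJ₀pos
    have hJ₁' : (0 : ℝ) < J₁ := hJ₀'.trans_le (by exact_mod_cast hJle)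
    have hN2 : N ≤ 2 * X * J₀ * ρ.den := by
      have := Nat.lt_div_mul_add (a := N) (b := X * ρ.den) (by positivity)
      nlinarith [Nat.mul_le_mul_right (X * ρ.den) hJ₀pos]
    gcongr
    rw [div_le_iff₀ hJ₀']
    refine hJ₁N.trans ((div_le_iff₀ hs').2 ?_)
    exact_mod_cast hN2
  have hcard : ((Finset.Icc J₀ J₁).card : ℝ) ≤ N / ρ.den := by
    refine le_trans ?_ hJ₁N
    rw [Nat.card_Icc]
    exact_mod_cast (by omega : J₁ + 1 - J₀ ≤ J₁)
  calc (F.card : ℝ) = ∑ j ∈ Finset.Icc J₀ J₁, ((F.filter fun k => k / ρ.den = j).card : ℝ) := by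
        exact_mod_cast Finset.card_eq_sum_card_fiberwise hmaps
    _ ≤ ∑ j ∈ Finset.Icc J₀ J₁, (2 * κ * N * (j : ℝ)⁻¹ + 3) := by
        refine Finset.sum_le_sum fun j hj =>
          card_filter_div_eq_le hρ ?_ hκ fun k hk => (hF k hk).2.2
        exact hJ₀pos.trans_le (Finset.mem_Icc.1 hj).1
    _ = 2 * κ * N * ∑ j ∈ Finset.Icc J₀ J₁, (j : ℝ)⁻¹ + 3 * (Finset.Icc J₀ J₁).card := by
        rw [Finset.sum_add_distrib, ← Finset.mul_sum, Finset.sum_const, nsmul_eq_mul, mul_comm 3]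
    _ ≤ 2 * κ * N * (1 + Real.log (2 * X)) + 3 * (N / ρ.den) := by gcongr

end Counting

section LogLog

/-- The iterated binary length of `n`, an integer substitute for `log₂ log₂ n` which is positive for
every `n > 0`. -/
def logLog (n : ℕ) : ℕ := n.size.size

lemma logLog_pos {n : ℕ} (hn : 0 < n) : 0 < logLog n := Nat.size_pos.2 (Nat.size_pos.2 hn)

lemma two_pow_size_le {n : ℕ} (hn : 0 < n) : 2 ^ n.size ≤ 2 * n := by
  obtain ⟨k, hk⟩ := Nat.exists_eq_succ_of_ne_zero (Nat.size_pos.2 hn).ne'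
  have : 2 ^ k ≤ n := Nat.lt_size.1 (hk ▸ k.lt_succ_self)
  rw [hk, Nat.pow_succ']
  omega

lemma size_lt_two_pow_logLog (n : ℕ) : n.size < 2 ^ logLog n := Nat.lt_size_self _

lemma two_pow_logLog_le {n : ℕ} (hn : 0 < n) : 2 ^ logLog n ≤ 2 * n.size :=
  two_pow_size_le (Nat.size_pos.2 hn)

lemma logLog_mono : Monotone logLog := fun _ _ h => Nat.size_le_size (Nat.size_le_size h)

lemma tendsto_size_atTop : Tendsto Nat.size atTop atTop :=
  tendsto_atTop.2 fun b => (eventually_ge_atTop (2 ^ b)).mono fun _ h => (Nat.lt_size.2 h).le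

lemma tendsto_logLog_atTop : Tendsto logLog atTop atTop :=
  tendsto_size_atTop.comp tendsto_size_atTop

lemma mul_self_lt_of_logLog_add_one_lt {q r : ℕ} (h : logLog q + 1 < logLog r) : q * q < r := by
  have hr : 0 < r := Nat.pos_of_ne_zero fun h0 => by simp [h0, logLog] at h
  have hsize : 2 * q.size < r.size := by
    have hq := size_lt_two_pow_logLog q
    have hqr : 2 ^ (logLog q + 2) ≤ 2 ^ logLog r := Nat.pow_le_pow_right two_pos h
    have := two_pow_logLog_le hr
    rw [pow_add] at hqr
    omega
  calc q * q < 2 ^ q.size * 2 ^ q.size := Nat.mul_self_lt_mul_self (Nat.lt_size_self q)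
    _ = 2 ^ (2 * q.size) := by rw [← pow_add, two_mul]
    _ ≤ r := Nat.lt_size.1 hsize

end LogLog

section Approximation

lemma eventually_eval_le_two_pow (P : Polynomial ℕ) : ∀ᶠ n : ℕ in atTop, P.eval n ≤ 2 ^ n := by
  have hsum : (fun n : ℕ => ∑ i ∈ Finset.range (P.natDegree + 1), (P.coeff i : ℝ) * (n : ℝ) ^ i)
      =o[atTop] fun n => (2 : ℝ) ^ n :=
    Asymptotics.IsLittleO.fun_sum fun i _ =>
      (isLittleO_pow_const_const_pow_of_one_lt i one_lt_two).const_mul_left _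
  filter_upwards [hsum.bound one_pos] with n hn
  rw [Real.norm_of_nonneg (by positivity), Real.norm_of_nonneg (by positivity), one_mul] at hn
  rw [Polynomial.eval_eq_sum_range]
  exact_mod_cast hn

lemma eventually_exponent_le (c K A : ℕ) : ∀ᶠ r : ℕ in atTop,
    c + 8 * logLog r + K * (4 * logLog r) ^ A +
      K * (4 * logLog r + K * (4 * logLog r) ^ A) ^ A < r.size := by
  have hpoly := eventually_eval_le_two_pow (2 * (Polynomial.C c + 8 * .X +
    Polynomial.C K * (4 * .X) ^ A +
    Polynomial.C K * (4 * .X + Polynomial.C K * (4 * .X) ^ A) ^ A + 1))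
  filter_upwards [tendsto_logLog_atTop.eventually hpoly, eventually_gt_atTop 0] with r hr hr0
  simp only [Polynomial.eval_mul, Polynomial.eval_add, Polynomial.eval_pow, Polynomial.eval_C,
    Polynomial.eval_X, Polynomial.eval_ofNat, Polynomial.eval_one] at hr
  have := two_pow_logLog_le hr0
  omega

lemma exists_rat_abs_sub_le_of_lt_dnint {γ : ℝ} {Z h : ℕ}
    (hγ : ∀ m : ℕ, 0 < m → m < Z → (1 / 2 : ℝ) ^ h ≤ dnint (m * γ)) :
    ∃ ρ : ℚ, |γ - ρ| ≤ 1 / (ρ.den : ℝ) ^ 2 ∧ Z ≤ ρ.den ∧ ρ.den ≤ 2 ^ h := by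
  obtain ⟨ρ, hρ, hden⟩ := Real.exists_rat_abs_sub_le_and_den_le γ (pow_pos two_pos h)
  have hs : (0 : ℝ) < ρ.den := by exact_mod_cast ρ.den_pos
  refine ⟨ρ, hρ.trans ?_, ?_, hden⟩
  · rw [sq]
    gcongr
    exact_mod_cast hden.trans (Nat.le_succ _)
  · by_contra! hlt
    refine (hγ ρ.den ρ.den_pos hlt).not_gt ?_
    have hnum : (ρ : ℝ) * ρ.den = ρ.num := by exact_mod_cast ρ.mul_den_eq_num
    calc dnint (ρ.den * γ) ≤ |ρ.den * γ - ρ.num| := dnint_le_abs_sub _ _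
      _ = ρ.den * |γ - ρ| := by rw [← hnum, ← abs_of_pos hs, ← abs_mul, abs_of_pos hs]; ring_nf
      _ ≤ ρ.den * (1 / (((2 ^ h : ℕ) + 1) * ρ.den)) := by gcongr
      _ = 1 / (2 ^ h + 1) := by push_cast; field_simp
      _ < (1 / 2) ^ h := by
        rw [one_div_pow]
        exact one_div_lt_one_div_of_lt (by positivity) (lt_add_one _)

-- With `M = r.size`, a quasi-polynomial lower bound for `‖m γ‖` in the range `m ≤ Y` beats
-- `M ^ 4 * Y / r` because `log Y` is polynomial in `log log r`, while `log r` is exponential in it.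
lemma QuasipolyDiophantine.eventually_exists_rat {γ : ℝ} (hγ : QuasipolyDiophantine γ) (C : ℝ) :
    ∀ᶠ r : ℕ in atTop, ∃ (ρ : ℚ) (Y : ℕ), |γ - ρ| ≤ 1 / (ρ.den : ℝ) ^ 2 ∧
      r.size ^ 4 ≤ ρ.den ∧ r.size ^ 4 * ρ.den ≤ Y ∧
      ∀ m : ℕ, 0 < m → m ≤ Y → C * r.size ^ 4 * Y / r ≤ dnint (m * γ) := by
  obtain ⟨K, A, hγ⟩ := hγ
  have hdio : ∀ m k : ℕ, 0 < m → m < 2 ^ k → (1 / 2 : ℝ) ^ (K * k ^ A) ≤ dnint (m * γ) := by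
    refine fun m k hm hk => le_trans ?_ (hγ m hm)
    refine pow_le_pow_of_le_one (by norm_num) (by norm_num) ?_
    gcongr
    exact Nat.size_le.2 hk
  obtain ⟨c, hc⟩ := pow_unbounded_of_one_lt C one_lt_two
  filter_upwards [eventually_exponent_le c K A, eventually_gt_atTop 0] with r hr hr0
  set L := logLog r
  set h := K * (4 * L) ^ A
  set E := K * (4 * L + h) ^ A
  have hM : r.size ^ 4 < 2 ^ (4 * L) := by
    rw [mul_comm, pow_mul]
    exact Nat.pow_lt_pow_left (size_lt_two_pow_logLog r) four_ne_zero
  obtain ⟨ρ, hρ, hMden, hden⟩ :=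
    exists_rat_abs_sub_le_of_lt_dnint (γ := γ) (Z := r.size ^ 4) (h := h)
      fun m hm hlt => hdio m _ hm (hlt.trans hM)
  refine ⟨ρ, r.size ^ 4 * 2 ^ h, hρ, hMden, Nat.mul_le_mul_left _ hden, fun m hm hmY => ?_⟩
  have hmlt : m < 2 ^ (4 * L + h) := by
    rw [pow_add]
    exact hmY.trans_lt (Nat.mul_lt_mul_of_pos_right hM (by positivity))
  refine le_trans ?_ (hdio m _ hm hmlt)
  have hr' : (0 : ℝ) < r := by exact_mod_cast hr0
  have hM' : (r.size : ℝ) ^ 4 ≤ 2 ^ (4 * L) := by exact_mod_cast hM.le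
  rw [div_le_iff₀ hr', one_div_pow, one_div, inv_mul_eq_div, le_div_iff₀ (by positivity)]
  calc C * r.size ^ 4 * (r.size ^ 4 * 2 ^ h : ℕ) * 2 ^ E
      ≤ 2 ^ c * 2 ^ (4 * L) * (2 ^ (4 * L) * 2 ^ h) * 2 ^ E := by push_cast; gcongr
    _ = 2 ^ (c + 8 * L + h + E) := by simp only [← pow_add]; congr 1; ring
    _ ≤ r := by exact_mod_cast Nat.lt_size.1 hr

lemma log_two_mul_size_pow_le {r : ℕ} (hr : 0 < r) :
    1 + Real.log (2 * (r.size ^ 4 : ℕ)) ≤ 5 * logLog r := by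
  have hL : (1 : ℝ) ≤ logLog r := by exact_mod_cast logLog_pos hr
  have hM : 0 < r.size := Nat.size_pos.2 hr
  have hlt : 2 * (r.size ^ 4 : ℕ) ≤ (2 : ℝ) ^ (4 * logLog r + 1) := by
    have := Nat.pow_le_pow_left (size_lt_two_pow_logLog r).le 4
    rw [pow_succ' (2 : ℝ), mul_comm 4, pow_mul]
    exact_mod_cast Nat.mul_le_mul_left 2 this
  calc 1 + Real.log (2 * (r.size ^ 4 : ℕ)) ≤ 1 + Real.log (2 ^ (4 * logLog r + 1)) := by
        gcongr
    _ = 1 + (4 * logLog r + 1) * Real.log 2 := by rw [Real.log_pow]; push_cast; ring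
    _ ≤ 5 * logLog r := by nlinarith [Real.log_two_lt_d9, Real.log_two_gt_d9]

lemma QuasipolyDiophantine.eventually_card_close_le_of_le_mul {γ C : ℝ}
    (hγ : QuasipolyDiophantine γ) (hC : 0 ≤ C) :
    ∀ᶠ r : ℕ in atTop, ∀ (N : ℕ) (κ : ℝ), 0 ≤ κ → κ * r ≤ C * N → ∀ F : Finset ℕ,
      (∀ k ∈ F, k < N ∧ N ≤ k * r.size ^ 4 ∧ dnint (((N : ℝ) - k) * γ) < κ * (N / k)) →
      (F.card : ℝ) ≤ N * (10 * κ * logLog r + 3 / r.size ^ 4) := by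
  filter_upwards [hγ.eventually_exists_rat C, eventually_gt_atTop 0]
    with r ⟨ρ, Y, hρ, hMden, hMY, hlow⟩ hr N κ hκ hκr F hF
  have hr' : (0 : ℝ) < r := by exact_mod_cast hr
  have hM : 0 < r.size := Nat.size_pos.2 hr
  rcases le_or_gt N Y with hNY | hNY
  · have hempty : F = ∅ := by
      refine Finset.eq_empty_of_forall_notMem fun k hk => ?_
      obtain ⟨hkN, hNk, hclose⟩ := hF k hk
      have hk0 : 0 < k := Nat.pos_of_ne_zero fun h0 => by simp [h0] at hNk; omega
      have hk' : (0 : ℝ) < k := by exact_mod_cast hk0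
      have hratio : (N : ℝ) / k ≤ r.size ^ 4 := by
        rw [div_le_iff₀ hk', mul_comm]
        exact_mod_cast hNk
      rw [← Nat.cast_sub hkN.le] at hclose
      refine hclose.not_ge (le_trans ?_ (hlow (N - k) (by omega) (by omega)))
      calc κ * (N / k) ≤ C * N / r * r.size ^ 4 := by
            gcongr
            exact (le_div_iff₀ hr').2 hκr
        _ = C * r.size ^ 4 * N / r := by ring
        _ ≤ C * r.size ^ 4 * Y / r := by gcongr
    rw [hempty, Finset.card_empty, Nat.cast_zero]
    positivity
  · have hcard := card_close_le hρ (Nat.pow_pos (n := 4) hM) (hMY.trans hNY.le) hκ hF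
    have hden : (r.size : ℝ) ^ 4 ≤ ρ.den := by exact_mod_cast hMden
    calc (F.card : ℝ)
        ≤ 2 * κ * N * (1 + Real.log (2 * (r.size ^ 4 : ℕ))) + 3 * (N / ρ.den) := hcard
      _ ≤ 2 * κ * N * (5 * logLog r) + 3 * (N / r.size ^ 4) := by
        gcongr
        exact log_two_mul_size_pow_le hr
      _ = N * (10 * κ * logLog r + 3 / r.size ^ 4) := by ring

lemma card_le_div_of_mul_lt {N X : ℕ} (hX : 0 < X) {F : Finset ℕ}
    (hF : ∀ k ∈ F, 0 < k ∧ k * X < N) : (F.card : ℝ) ≤ N / X := by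
  have hsub : F ⊆ Finset.Icc 1 (N / X) := fun k hk =>
    Finset.mem_Icc.2 ⟨(hF k hk).1, (Nat.le_div_iff_mul_le hX).2 (hF k hk).2.le⟩
  calc (F.card : ℝ) ≤ (N / X : ℕ) := by
        exact_mod_cast (Finset.card_le_card hsub).trans_eq (by simp)
    _ ≤ N / X := Nat.cast_div_le

lemma QuasipolyDiophantine.eventually_card_close_le {γ C : ℝ} (hγ : QuasipolyDiophantine γ)
    (hC : 0 ≤ C) : ∀ᶠ r : ℕ in atTop, ∀ (N : ℕ) (κ : ℝ), 0 ≤ κ → κ * r ≤ C * N → ∀ F : Finset ℕ,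
      (∀ k ∈ F, 0 < k ∧ k < N ∧ dnint (((N : ℝ) - k) * γ) < κ * (N / k)) →
      (F.card : ℝ) ≤ N * (10 * κ * logLog r + 4 / r.size ^ 4) := by
  filter_upwards [hγ.eventually_card_close_le_of_le_mul hC, eventually_gt_atTop 0]
    with r hr hr0 N κ hκ hκr F hF
  have hM : 0 < r.size ^ 4 := Nat.pow_pos (Nat.size_pos.2 hr0)
  have hlarge := hr N κ hκ hκr (F.filter fun k => N ≤ k * r.size ^ 4) fun k hk => by
    obtain ⟨hkF, hNk⟩ := Finset.mem_filter.1 hk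
    exact ⟨(hF k hkF).2.1, hNk, (hF k hkF).2.2⟩
  have hsmall := card_le_div_of_mul_lt hM (F := F.filter fun k => ¬ N ≤ k * r.size ^ 4)
    fun k hk => by
      obtain ⟨hkF, hNk⟩ := Finset.mem_filter.1 hk
      exact ⟨(hF k hkF).1, not_le.1 hNk⟩
  calc (F.card : ℝ) = (F.filter fun k => N ≤ k * r.size ^ 4).card +
        (F.filter fun k => ¬ N ≤ k * r.size ^ 4).card := by
        exact_mod_cast (Finset.card_filter_add_card_filter_not _).symm
    _ ≤ N * (10 * κ * logLog r + 3 / r.size ^ 4) + N / (r.size ^ 4 : ℕ) := add_le_add hlarge hsmall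
    _ = N * (10 * κ * logLog r + 4 / r.size ^ 4) := by push_cast; ring

end Approximation

section Resonance

lemma log_size_le_logLog {n : ℕ} (hn : 0 < n) : Real.log n.size ≤ logLog n := by
  have hM : (0 : ℝ) < n.size := by exact_mod_cast Nat.size_pos.2 hn
  calc Real.log n.size ≤ Real.log (2 ^ logLog n) :=
        Real.log_le_log hM (by exact_mod_cast (size_lt_two_pow_logLog n).le)
    _ = logLog n * Real.log 2 := by rw [Real.log_pow]
    _ ≤ logLog n := mul_le_of_le_one_right (Nat.cast_nonneg _) (by linarith [Real.log_two_lt_d9])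

lemma sum_inv_divisors_le {n X : ℕ} (hX : 0 < X) (hcard : n.divisors.card ≤ X) :
    ∑ d ∈ n.divisors, (d : ℝ)⁻¹ ≤ 2 + Real.log X := by
  have hX' : (0 : ℝ) < X := by exact_mod_cast hX
  have hsmall : ∑ d ∈ n.divisors with d ≤ X, (d : ℝ)⁻¹ ≤ 1 + Real.log X := by
    refine le_trans ?_ ((sum_Icc_inv_le one_pos hX).trans_eq (by rw [Nat.cast_one, div_one]))
    refine Finset.sum_le_sum_of_subset_of_nonneg (fun d hd => ?_) fun _ _ _ => by positivity
    obtain ⟨hdn, hdX⟩ := Finset.mem_filter.1 hd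
    exact Finset.mem_Icc.2 ⟨Nat.pos_of_mem_divisors hdn, hdX⟩
  have hlarge : ∑ d ∈ n.divisors with ¬ d ≤ X, (d : ℝ)⁻¹ ≤ 1 :=
    calc ∑ d ∈ n.divisors with ¬ d ≤ X, (d : ℝ)⁻¹
        ≤ (n.divisors.filter fun d => ¬ d ≤ X).card • (X : ℝ)⁻¹ := by
          refine Finset.sum_le_card_nsmul _ _ _ fun d hd => ?_
          gcongr
          exact (not_le.1 (Finset.mem_filter.1 hd).2).le
      _ ≤ X * (X : ℝ)⁻¹ := by
          rw [nsmul_eq_mul]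
          gcongr
          exact (Finset.card_filter_le _ _).trans hcard
      _ = 1 := mul_inv_cancel₀ hX'.ne'
  rw [← Finset.sum_filter_add_sum_filter_not n.divisors (· ≤ X)]
  linarith

lemma sum_inv_divisors_le_logLog {n : ℕ} (hn : 0 < n) (hcard : n.divisors.card ≤ n.size ^ 3) :
    ∑ d ∈ n.divisors, (d : ℝ)⁻¹ ≤ 5 * logLog n := by
  have hL : (1 : ℝ) ≤ logLog n := by exact_mod_cast logLog_pos hn
  refine (sum_inv_divisors_le (Nat.pow_pos (Nat.size_pos.2 hn)) hcard).trans ?_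
  rw [Nat.cast_pow, Real.log_pow]
  push_cast
  linarith [log_size_le_logLog hn]

lemma sum_inv_sq_divisors_le (n : ℕ) : ∑ d ∈ n.divisors, ((d : ℝ) ^ 2)⁻¹ ≤ 2 := by
  refine le_trans (Finset.sum_le_sum_of_subset_of_nonneg (t := Finset.Ioo 0 (n + 1))
    (fun d hd => ?_) fun _ _ _ => by positivity) ((sum_Ioo_inv_sq_le 0 (n + 1)).trans (by norm_num))
  exact Finset.mem_Ioo.2 ⟨Nat.pos_of_mem_divisors hd, Nat.lt_succ_of_le (Nat.divisor_le hd)⟩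

/-- `centreGap γ q r = ‖(r' - q') γ‖`, where `q'/r'` is `q/r` in lowest terms: any two centres
`(a + γ) / q` and `(b + γ) / r` are at distance at least `gcd q r * centreGap γ q r / (q r)`. -/
noncomputable def centreGap (γ : ℝ) (q r : ℕ) : ℝ :=
  dnint (((r / q.gcd r : ℕ) - (q / q.gcd r : ℕ)) * γ)

/-- `q` is resonant with `r`: this is necessary for approximation sets of denominators `q < r` and
radii given by a weight of size `O(1 / (q (log log q) ^ 2))` to overlap more than independent sets
would, when `log log q` and `log log r` nearly agree. -/
def Resonant (γ C : ℝ) (r q : ℕ) : Prop :=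
  0 < q ∧ q < r ∧ centreGap γ q r < C * (r / q) / (q.gcd r * (logLog r : ℝ) ^ 2)

lemma QuasipolyDiophantine.eventually_card_resonant_le {γ C : ℝ} (hγ : QuasipolyDiophantine γ)
    (hC : 0 ≤ C) : ∀ᶠ r : ℕ in atTop, ∀ d : ℕ, d ∣ r → ∀ S : Finset ℕ,
      (∀ q ∈ S, Resonant γ C r q ∧ q.gcd r = d) →
      (S.card : ℝ) ≤ r / d * (10 * C / (d * logLog r) + 4 / r.size ^ 4) := by
  filter_upwards [hγ.eventually_card_close_le hC, eventually_gt_atTop 0]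
    with r hr hr0 d hdr S hS
  obtain ⟨N, rfl⟩ := hdr
  have hd : 0 < d := Nat.pos_of_mul_pos_right hr0
  have hL : (1 : ℝ) ≤ logLog (d * N) := Nat.one_le_cast.2 (logLog_pos hr0)
  have hdvd : ∀ q ∈ S, d ∣ q := fun q hq => (hS q hq).2 ▸ q.gcd_dvd_left _
  have hinj : Set.InjOn (· / d) (S : Set ℕ) := fun x hx y hy h =>
    (Nat.div_left_inj (hdvd x hx) (hdvd y hy)).1 h
  have hκ : C / (d * (logLog (d * N) : ℝ) ^ 2) * (d * N : ℕ) ≤ C * N :=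
    calc C / (d * (logLog (d * N) : ℝ) ^ 2) * (d * N : ℕ) = C * N / (logLog (d * N) : ℝ) ^ 2 := by
          push_cast
          field_simp
      _ ≤ C * N := div_le_self (by positivity) (one_le_pow₀ hL)
  have hcard := hr N (C / (d * (logLog (d * N) : ℝ) ^ 2)) (by positivity) hκ (S.image (· / d))
    (Finset.forall_mem_image.2 fun q hq => by
      obtain ⟨⟨hq0, hqr, hgap⟩, hgcd⟩ := hS q hq
      obtain ⟨k, rfl⟩ := hdvd q hq
      have hk : 0 < k := Nat.pos_of_mul_pos_left hq0
      rw [centreGap, hgcd, Nat.mul_div_cancel_left _ hd, Nat.mul_div_cancel_left _ hd] at hgap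
      rw [Nat.mul_div_cancel_left _ hd]
      refine ⟨hk, lt_of_mul_lt_mul_left hqr d.zero_le, hgap.trans_eq ?_⟩
      push_cast
      field_simp)
  rw [Finset.card_image_of_injOn hinj] at hcard
  refine hcard.trans_eq ?_
  push_cast
  field_simp

lemma sum_gcd_le_of_card_le {r : ℕ} (hr : 0 < r) {ℓ : ℝ} (hℓ : 0 ≤ ℓ) {S : Finset ℕ} {B : ℕ → ℝ}
    (hB : ∀ d ∈ r.divisors, ((S.filter fun q => q.gcd r = d).card : ℝ) ≤ r / d * B d) :
    ∑ q ∈ S, (2 * ℓ * (q.gcd r : ℝ) + 1) / r ≤ ∑ d ∈ r.divisors, (2 * ℓ + (d : ℝ)⁻¹) * B d := by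
  rw [← Finset.sum_fiberwise_of_maps_to (g := fun q => q.gcd r) (t := r.divisors)
    fun q _ => Nat.mem_divisors.2 ⟨q.gcd_dvd_right r, hr.ne'⟩]
  refine Finset.sum_le_sum fun d hd => ?_
  have hd' : (0 : ℝ) < d := by exact_mod_cast Nat.pos_of_mem_divisors hd
  calc ∑ q ∈ S with q.gcd r = d, (2 * ℓ * (q.gcd r : ℝ) + 1) / r
      = (S.filter fun q => q.gcd r = d).card * ((2 * ℓ * d + 1) / r) := by
        rw [← nsmul_eq_mul]
        exact Finset.sum_eq_card_nsmul fun q hq => by rw [(Finset.mem_filter.1 hq).2]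
    _ ≤ r / d * B d * ((2 * ℓ * d + 1) / r) := by gcongr; exact hB d hd
    _ = (2 * ℓ + (d : ℝ)⁻¹) * B d := by field_simp

lemma sum_divisors_resonance_le {r : ℕ} (hr : 0 < r) (hcard : r.divisors.card ≤ r.size ^ 3)
    {C ℓ : ℝ} (hC : 0 ≤ C) (hℓ : 0 ≤ ℓ) (hℓ1 : ℓ ≤ 1) :
    ∑ d ∈ r.divisors, (2 * ℓ + (d : ℝ)⁻¹) * (10 * C / (d * logLog r) + 4 / r.size ^ 4) ≤
      100 * C * ℓ + 20 * C / logLog r + 12 / r.size := by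
  have hL : (0 : ℝ) < logLog r := by exact_mod_cast logLog_pos hr
  have hM : (0 : ℝ) < r.size := by exact_mod_cast Nat.size_pos.2 hr
  have hcard' : (r.divisors.card : ℝ) ≤ (r.size : ℝ) ^ 3 := by exact_mod_cast hcard
  set L : ℝ := (logLog r : ℝ)
  calc ∑ d ∈ r.divisors, (2 * ℓ + (d : ℝ)⁻¹) * (10 * C / (d * L) + 4 / r.size ^ 4)
      ≤ ∑ d ∈ r.divisors, (20 * C * ℓ / L * (d : ℝ)⁻¹ + 10 * C / L * ((d : ℝ) ^ 2)⁻¹ +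
          12 / r.size ^ 4) := by
        refine Finset.sum_le_sum fun d hd => ?_
        have hd : (d : ℝ)⁻¹ ≤ 1 :=
          inv_le_one_of_one_le₀ (by exact_mod_cast Nat.pos_of_mem_divisors hd)
        calc (2 * ℓ + (d : ℝ)⁻¹) * (10 * C / (d * L) + 4 / r.size ^ 4)
            = 20 * C * ℓ / L * (d : ℝ)⁻¹ + 10 * C / L * ((d : ℝ) ^ 2)⁻¹ +
              (2 * ℓ + (d : ℝ)⁻¹) * (4 / r.size ^ 4) := by ring
          _ ≤ 20 * C * ℓ / L * (d : ℝ)⁻¹ + 10 * C / L * ((d : ℝ) ^ 2)⁻¹ +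
              (2 * 1 + 1) * (4 / r.size ^ 4) := by gcongr
          _ = _ := by ring
    _ = 20 * C * ℓ / L * ∑ d ∈ r.divisors, (d : ℝ)⁻¹ +
          10 * C / L * ∑ d ∈ r.divisors, ((d : ℝ) ^ 2)⁻¹ +
          r.divisors.card * (12 / r.size ^ 4) := by
        rw [Finset.sum_add_distrib, Finset.sum_add_distrib, ← Finset.mul_sum, ← Finset.mul_sum,
          Finset.sum_const, nsmul_eq_mul]
    _ ≤ 20 * C * ℓ / L * (5 * L) + 10 * C / L * 2 + r.size ^ 3 * (12 / r.size ^ 4) := by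
        gcongr
        · exact sum_inv_divisors_le_logLog hr hcard
        · exact sum_inv_sq_divisors_le r
    _ = 100 * C * ℓ + 20 * C / L + 12 / r.size := by field_simp; ring

lemma eventually_div_le {f : ℕ → ℕ} (hf : Tendsto f atTop atTop) (c : ℝ) {ε : ℝ} (hε : 0 < ε) :
    ∀ᶠ n in atTop, c / f n ≤ ε :=
  (((tendsto_natCast_atTop_atTop (R := ℝ)).comp hf).const_div_atTop c).eventually_le_const hε

lemma QuasipolyDiophantine.eventually_sum_resonant_le {γ C ℓ : ℝ} (hγ : QuasipolyDiophantine γ)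
    (hC : 0 ≤ C) (hℓ : 0 < ℓ) (hℓ1 : ℓ ≤ 1) : ∀ᶠ r : ℕ in atTop, r.divisors.card ≤ r.size ^ 3 →
      ∀ S : Finset ℕ, (∀ q ∈ S, Resonant γ C r q) →
        ∑ q ∈ S, (2 * ℓ * (q.gcd r : ℝ) + 1) / r ≤ (100 * C + 2) * ℓ := by
  filter_upwards [hγ.eventually_card_resonant_le hC, eventually_gt_atTop 0,
    eventually_div_le tendsto_logLog_atTop (20 * C) hℓ, eventually_div_le tendsto_size_atTop 12 hℓ]
    with r hr hr0 hrL hrM hcard S hS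
  have hfib : ∀ d ∈ r.divisors, ((S.filter fun q => q.gcd r = d).card : ℝ) ≤
      r / d * (10 * C / (d * logLog r) + 4 / r.size ^ 4) := fun d hd =>
    hr d (Nat.dvd_of_mem_divisors hd) _ fun q hq =>
      ⟨hS q (Finset.mem_filter.1 hq).1, (Finset.mem_filter.1 hq).2⟩
  linarith [sum_gcd_le_of_card_le hr0 hℓ.le hfib, sum_divisors_resonance_le hr0 hcard hC hℓ.le hℓ1]

end Resonance

section Overlap

/-- The `a`-th centre of the approximation set of denominator `q`: the solution of
`q x - γ = a`. -/
noncomputable def centre (γ : ℝ) (q : ℕ) (a : ℤ) : ℝ := (a + γ) / q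

/-- The set of `x` with `‖q x - γ‖ < a`, a union of intervals of radius `a / q` about the
centres. -/
def approxSet (γ a : ℝ) (q : ℕ) : Set ℝ := {x | dnint (q * x - γ) < a}

/-- The pairs of (indices of) centres of denominators `q` and `r` at distance less than `Δ`, the
first lying in `(u, u + ℓ)` enlarged by `ℓ / 2` on both sides. -/
def closePairs (γ : ℝ) (q r : ℕ) (Δ u ℓ : ℝ) : Set (ℤ × ℤ) :=
  {p | |centre γ q p.1 - centre γ r p.2| < Δ ∧
    centre γ q p.1 ∈ Set.Icc (u - ℓ / 2) (u + 3 * ℓ / 2)}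

variable {γ a b u ℓ Δ : ℝ} {q r : ℕ}

lemma abs_sub_centre_lt_iff (hq : 0 < q) {x : ℝ} {i : ℤ} :
    |x - centre γ q i| < a / q ↔ |q * x - γ - i| < a := by
  have hq' : (0 : ℝ) < q := by exact_mod_cast hq
  rw [lt_div_iff₀ hq', centre, ← abs_of_pos hq', ← abs_mul, abs_of_pos hq']
  have heq : (x - (i + γ) / q) * q = q * x - γ - i := by field_simp; ring
  rw [heq]

lemma mem_approxSet_iff (hq : 0 < q) {x : ℝ} :
    x ∈ approxSet γ a q ↔ ∃ i : ℤ, x ∈ Metric.ball (centre γ q i) (a / q) := by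
  simp only [Metric.mem_ball, Real.dist_eq, abs_sub_centre_lt_iff hq]
  exact dnint_lt_iff

lemma finite_of_forall_card_le {α : Type*} {s : Set α} {c : ℝ}
    (h : ∀ F : Finset α, (F : Set α) ⊆ s → (F.card : ℝ) ≤ c) : s.Finite := by
  by_contra hinf
  obtain ⟨F, hF, hcard⟩ := Set.Infinite.exists_subset_card_eq hinf (⌊c⌋₊ + 1)
  have hle := h F hF
  rw [hcard] at hle
  push_cast at hle
  exact (Nat.lt_floor_add_one c).not_ge hle

lemma volume_real_inter_approxSet_le (hq : 0 < q) (hr : 0 < r) (ha : 0 ≤ a) (hb : 0 ≤ b)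
    (haℓ : a / q ≤ ℓ / 2) {c : ℝ} (hc : ∀ F : Finset (ℤ × ℤ),
      (F : Set (ℤ × ℤ)) ⊆ closePairs γ q r (a / q + b / r) u ℓ → (F.card : ℝ) ≤ c) :
    volume.real (approxSet γ a q ∩ approxSet γ b r ∩ Set.Ioo u (u + ℓ)) ≤
      2 * min (a / q) (b / r) * c := by
  have hfin : (closePairs γ q r (a / q + b / r) u ℓ).Finite :=
    finite_of_forall_card_le hc
  set I : ℤ × ℤ → Set ℝ := fun p =>
    Metric.ball (centre γ q p.1) (a / q) ∩ Metric.ball (centre γ r p.2) (b / r)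
  have hI : ∀ p, volume.real (I p) ≤ 2 * min (a / q) (b / r) := by
    intro p
    rw [mul_min_of_nonneg _ _ two_pos.le, ← Real.volume_real_ball (by positivity),
      ← Real.volume_real_ball (by positivity)]
    exact le_min (measureReal_mono Set.inter_subset_left measure_ball_lt_top.ne)
      (measureReal_mono Set.inter_subset_right measure_ball_lt_top.ne)
  have hsub : approxSet γ a q ∩ approxSet γ b r ∩ Set.Ioo u (u + ℓ) ⊆
      ⋃ p ∈ hfin.toFinset, I p := by
    rintro x ⟨⟨hxq, hxr⟩, hxu, hxℓ⟩
    obtain ⟨i, hi⟩ := (mem_approxSet_iff hq).1 hxq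
    obtain ⟨j, hj⟩ := (mem_approxSet_iff hr).1 hxr
    refine Set.mem_biUnion (x := (i, j)) (hfin.mem_toFinset.2 ⟨?_, ?_, ?_⟩) ⟨hi, hj⟩ <;>
    rw [Metric.mem_ball, Real.dist_eq, abs_lt] at hi hj
    · exact abs_lt.2 ⟨by linarith, by linarith⟩
    · linarith
    · linarith
  calc volume.real (approxSet γ a q ∩ approxSet γ b r ∩ Set.Ioo u (u + ℓ))
      ≤ volume.real (⋃ p ∈ hfin.toFinset, I p) := by
        refine measureReal_mono hsub ((measure_biUnion_finset_le _ I).trans_lt ?_).ne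
        exact ENNReal.sum_lt_top.2 fun p _ =>
          (measure_mono Set.inter_subset_left).trans_lt measure_ball_lt_top
    _ ≤ ∑ p ∈ hfin.toFinset, volume.real (I p) := measureReal_biUnion_finset_le _ I
    _ ≤ hfin.toFinset.card • (2 * min (a / q) (b / r)) :=
        Finset.sum_le_card_nsmul _ _ _ fun p _ => hI p
    _ ≤ 2 * min (a / q) (b / r) * c := by
        rw [nsmul_eq_mul, mul_comm]
        gcongr
        exact hc _ hfin.coe_toFinset.subset

lemma card_centres_le (hq : 0 < q) {x y : ℝ} (hxy : x ≤ y) {k : ℕ} (hk : 0 < k) {G : Finset ℤ}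
    (hG : ∀ i ∈ G, centre γ q i ∈ Set.Icc x y) (hdvd : ∀ i ∈ G, ∀ j ∈ G, (k : ℤ) ∣ i - j) :
    (G.card : ℝ) ≤ q * (y - x) / k + 1 := by
  have hq' : (0 : ℝ) < q := by exact_mod_cast hq
  refine (card_le_of_dvd_sub (x := q * x - γ) (y := q * y - γ) (by gcongr) hk (fun i hi => ?_)
    hdvd).trans_eq (by ring)
  obtain ⟨hxi, hiy⟩ := hG i hi
  rw [centre] at hxi hiy
  rw [le_div_iff₀ hq'] at hxi
  rw [div_le_iff₀ hq'] at hiy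
  constructor <;> linarith

lemma card_le_mul_card_image_real {α β : Type*} [DecidableEq β] {F : Finset α} {f : α → β} {c : ℝ}
    (h : ∀ y ∈ F.image f, ((F.filter fun x => f x = y).card : ℝ) ≤ c) :
    (F.card : ℝ) ≤ c * (F.image f).card := by
  rw [Finset.card_eq_sum_card_image f F, Nat.cast_sum]
  exact (Finset.sum_le_card_nsmul _ _ _ h).trans_eq (by rw [nsmul_eq_mul, mul_comm])

lemma card_closePairs_le (hq : 0 < q) (hr : 0 < r) (hΔ : 0 ≤ Δ) (hℓ : 0 ≤ ℓ)
    {F : Finset (ℤ × ℤ)} (hF : (F : Set (ℤ × ℤ)) ⊆ closePairs γ q r Δ u ℓ) :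
    (F.card : ℝ) ≤ (2 * ℓ * q + 1) * (2 * r * Δ + 1) := by
  have hfib : ∀ i ∈ F.image Prod.fst,
      ((F.filter fun p => p.1 = i).card : ℝ) ≤ 2 * r * Δ + 1 := by
    intro i _
    have hinj : Set.InjOn Prod.snd (F.filter fun p => p.1 = i : Set (ℤ × ℤ)) := fun x hx y hy h =>
      Prod.ext ((Finset.mem_filter.1 hx).2.trans (Finset.mem_filter.1 hy).2.symm) h
    rw [← Finset.card_image_of_injOn hinj]
    refine (card_centres_le (γ := γ) (k := 1) hr (x := centre γ q i - Δ) (y := centre γ q i + Δ)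
      (by linarith) one_pos (Finset.forall_mem_image.2 fun p hp => ?_) (by simp)).trans_eq ?_
    · obtain ⟨hpF, rfl⟩ := Finset.mem_filter.1 hp
      have := abs_lt.1 (hF hpF).1
      constructor <;> linarith
    · push_cast
      ring
  have himage : ((F.image Prod.fst).card : ℝ) ≤ 2 * ℓ * q + 1 := by
    refine (card_centres_le (γ := γ) (k := 1) hq (x := u - ℓ / 2) (y := u + 3 * ℓ / 2)
      (by linarith) one_pos (Finset.forall_mem_image.2 fun p hp => (hF hp).2) (by simp)).trans_eq ?_
    push_cast
    ring
  refine (card_le_mul_card_image_real hfib).trans ?_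
  rw [mul_comm]
  gcongr

lemma abs_cross_sub_lt {d : ℕ} (hd : 0 < d) (hq : 0 < q) (hr : 0 < r) {p : ℤ × ℤ}
    (hp : p ∈ closePairs γ (d * q) (d * r) Δ u ℓ) :
    |((p.1 * r - p.2 * q : ℤ) : ℝ) + (r - q) * γ| < Δ * (d * q * r) := by
  have hpos : (0 : ℝ) < d * q * r := by positivity
  have heq : (centre γ (d * q) p.1 - centre γ (d * r) p.2) * (d * q * r) =
      ((p.1 * r - p.2 * q : ℤ) : ℝ) + (r - q) * γ := by
    rw [centre, centre]
    push_cast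
    field_simp
    ring
  rw [← heq, abs_mul, abs_of_pos hpos]
  exact mul_lt_mul_of_pos_right hp.1 hpos

lemma card_closePairs_fibre_le {d : ℕ} (hd : 0 < d) (hq : 0 < q) (hcop : q.Coprime r)
    (hℓ : 0 ≤ ℓ) {F : Finset (ℤ × ℤ)}
    (hF : (F : Set (ℤ × ℤ)) ⊆ closePairs γ (d * q) (d * r) Δ u ℓ) (n : ℤ) :
    ((F.filter fun p => p.1 * r - p.2 * q = n).card : ℝ) ≤ 2 * ℓ * d + 1 := by
  have hinj : Set.InjOn Prod.fst (F.filter fun p => p.1 * r - p.2 * q = n : Set (ℤ × ℤ)) := by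
    intro x hx y hy h
    have heq : y.2 * (q : ℤ) = x.2 * q := by
      linear_combination (Finset.mem_filter.1 hx).2 - (Finset.mem_filter.1 hy).2 - (r : ℤ) * h
    exact Prod.ext h (mul_right_cancel₀ (by exact_mod_cast hq.ne') heq).symm
  rw [← Finset.card_image_of_injOn hinj]
  refine (card_centres_le (γ := γ) (k := q) (Nat.mul_pos hd hq) (x := u - ℓ / 2)
    (y := u + 3 * ℓ / 2) (by linarith) hq (Finset.forall_mem_image.2 fun p hp => ?_)
    (Finset.forall_mem_image.2 fun x hx => Finset.forall_mem_image.2 fun y hy => ?_)).trans_eq ?_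
  · exact (hF (Finset.mem_filter.1 hp).1).2
  · refine (Nat.isCoprime_iff_coprime.2 hcop).dvd_of_dvd_mul_right (z := (r : ℤ)) ⟨x.2 - y.2, ?_⟩
    linear_combination (Finset.mem_filter.1 hx).2 - (Finset.mem_filter.1 hy).2
  · push_cast
    field_simp
    ring

lemma card_closePairs_le_of_coprime {d : ℕ} (hd : 0 < d) (hq : 0 < q) (hr : 0 < r)
    (hcop : q.Coprime r) (hℓ : 0 ≤ ℓ) {F : Finset (ℤ × ℤ)} (hΔ : 0 ≤ Δ)
    (hF : (F : Set (ℤ × ℤ)) ⊆ closePairs γ (d * q) (d * r) Δ u ℓ) :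
    (F.card : ℝ) ≤ (2 * ℓ * d + 1) * (4 * (Δ * (d * q * r)) +
      if dnint ((r - q) * γ) < Δ * (d * q * r) then 1 else 0) := by
  set E := Δ * (d * q * r)
  have hE0 : 0 ≤ E := by positivity
  set f : ℤ × ℤ → ℤ := fun p => p.1 * r - p.2 * q
  have himage : ((F.image f).card : ℝ) ≤ 2 * E + 1 := by
    refine (card_le_of_dvd_sub (k := 1) (x := -((r - q) * γ) - E) (y := -((r - q) * γ) + E)
      (by linarith) one_pos (Finset.forall_mem_image.2 fun p hp => ?_) (by simp)).trans_eq ?_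
    · have := abs_lt.1 (abs_cross_sub_lt hd hq hr (hF hp))
      constructor <;> linarith
    · push_cast
      ring
  refine (card_le_mul_card_image_real fun n _ =>
    card_closePairs_fibre_le hd hq hcop hℓ hF n).trans ?_
  refine mul_le_mul_of_nonneg_left ?_ (by positivity)
  rcases F.eq_empty_or_nonempty with rfl | ⟨p, hp⟩
  · rw [Finset.image_empty, Finset.card_empty, Nat.cast_zero]
    split_ifs <;> positivity
  · have hclose : dnint ((r - q) * γ) < E := by
      refine dnint_lt_iff.2 ⟨-f p, ?_⟩
      rw [Int.cast_neg, sub_neg_eq_add, add_comm]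
      exact abs_cross_sub_lt hd hq hr (hF hp)
    rw [if_pos hclose]
    linarith

lemma card_closePairs_le_gcd (hq : 0 < q) (hr : 0 < r) (hΔ : 0 ≤ Δ) (hℓ : 0 ≤ ℓ)
    {F : Finset (ℤ × ℤ)} (hF : (F : Set (ℤ × ℤ)) ⊆ closePairs γ q r Δ u ℓ) :
    (F.card : ℝ) ≤ (2 * ℓ * q.gcd r + 1) * (4 * (Δ * (q * r / q.gcd r)) +
      if centreGap γ q r < Δ * (q * r / q.gcd r) then 1 else 0) := by
  obtain ⟨q', r', hcop, hq', hr'⟩ := Nat.exists_coprime q r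
  have hd : 0 < q.gcd r := Nat.gcd_pos_of_pos_left _ hq
  rw [centreGap]
  generalize q.gcd r = d at hd hq' hr' ⊢
  rw [mul_comm] at hq' hr'
  subst hq' hr'
  have hcard := card_closePairs_le_of_coprime hd (Nat.pos_of_mul_pos_left hq)
    (Nat.pos_of_mul_pos_left hr) hcop hℓ hΔ hF
  rw [Nat.mul_div_cancel_left _ hd, Nat.mul_div_cancel_left _ hd]
  have heq : ((d * q' : ℕ) : ℝ) * (d * r' : ℕ) / d = d * q' * r' := by
    push_cast
    field_simp
  rwa [heq]

lemma min_mul_add_le {x y : ℝ} (hx : 0 ≤ x) (hy : 0 ≤ y) : min x y * (x + y) ≤ 2 * (x * y) := by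
  rcases le_total x y with h | h
  · rw [min_eq_left h]
    nlinarith
  · rw [min_eq_right h]
    nlinarith

lemma volume_real_inter_le_of_one_le (hq : 0 < q) (hr : 0 < r) (ha : 0 ≤ a) (hb : 0 ≤ b)
    (hℓ : 0 ≤ ℓ) (haℓ : a / q ≤ ℓ / 2) (hℓq : 1 ≤ ℓ * q) :
    volume.real (approxSet γ a q ∩ approxSet γ b r ∩ Set.Ioo u (u + ℓ)) ≤
      24 * ℓ * (a * b) + 6 * ℓ * b * (q / r) := by
  set m := min (a / q) (b / r)
  have hmb : m ≤ b / r := min_le_right _ _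
  have hsum : m * (a / q + b / r) ≤ 2 * (a / q * (b / r)) :=
    min_mul_add_le (by positivity) (by positivity)
  calc volume.real (approxSet γ a q ∩ approxSet γ b r ∩ Set.Ioo u (u + ℓ))
      ≤ 2 * m * ((2 * ℓ * q + 1) * (2 * r * (a / q + b / r) + 1)) :=
        volume_real_inter_approxSet_le hq hr ha hb haℓ fun F hF =>
          card_closePairs_le hq hr (by positivity) hℓ hF
    _ ≤ 2 * m * ((2 * ℓ * q + ℓ * q) * (2 * r * (a / q + b / r) + 1)) := by gcongr
    _ = 6 * ℓ * q * (2 * r * (m * (a / q + b / r)) + m) := by ring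
    _ ≤ 6 * ℓ * q * (2 * r * (2 * (a / q * (b / r))) + b / r) :=
        mul_le_mul_of_nonneg_left
          (add_le_add (mul_le_mul_of_nonneg_left hsum (by positivity)) hmb) (by positivity)
    _ = 24 * ℓ * (a * b) + 6 * ℓ * b * (q / r) := by field_simp; ring

lemma volume_real_inter_le_gcd (hq : 0 < q) (hr : 0 < r) (ha : 0 ≤ a) (hb : 0 ≤ b)
    (hℓ : 0 ≤ ℓ) (hℓ1 : ℓ ≤ 1) (haℓ : a / q ≤ ℓ / 2) :
    volume.real (approxSet γ a q ∩ approxSet γ b r ∩ Set.Ioo u (u + ℓ)) ≤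
      48 * (a * b) + 2 * b *
        if centreGap γ q r < (r * a + q * b) / q.gcd r then (2 * ℓ * q.gcd r + 1) / r else 0 := by
  have hd : (1 : ℝ) ≤ q.gcd r := by exact_mod_cast Nat.gcd_pos_of_pos_left r hq
  set d : ℝ := (q.gcd r : ℝ)
  set m := min (a / q) (b / r)
  have hmb : m ≤ b / r := min_le_right _ _
  have hsum : m * (a / q + b / r) ≤ 2 * (a / q * (b / r)) :=
    min_mul_add_le (by positivity) (by positivity)
  have hE : (a / q + b / r) * (q * r / d) = (r * a + q * b) / d := by field_simp
  have hc := volume_real_inter_approxSet_le (γ := γ) (u := u) hq hr ha hb haℓ fun F hF =>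
    card_closePairs_le_gcd hq hr (by positivity) hℓ hF
  rw [hE] at hc
  refine hc.trans ?_
  set χ : ℝ := if centreGap γ q r < (r * a + q * b) / d then 1 else 0 with hχ
  calc 2 * m * ((2 * ℓ * d + 1) * (4 * ((r * a + q * b) / d) + χ))
      = 8 * (q * r * (m * (a / q + b / r))) * (2 * ℓ + 1 / d) + 2 * m * ((2 * ℓ * d + 1) * χ) := by
        rw [← hE]
        field_simp
        ring
    _ ≤ 8 * (q * r * (2 * (a / q * (b / r)))) * (2 * 1 + 1) +
          2 * (b / r) * ((2 * ℓ * d + 1) * χ) := by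
        have hinv : 1 / d ≤ 1 := div_le_one_of_le₀ hd (by positivity)
        refine add_le_add (mul_le_mul ?_ (by linarith) (by positivity) (by positivity)) (by gcongr)
        exact mul_le_mul_of_nonneg_left (mul_le_mul_of_nonneg_left hsum (by positivity))
          (by positivity)
    _ = 48 * (a * b) + 2 * b * ((2 * ℓ * d + 1) / r * χ) := by field_simp; ring
    _ = _ := by rw [hχ, mul_ite, mul_one, mul_zero]

end Overlap

section SingleSet

variable {γ a u ℓ : ℝ} {q : ℕ}

lemma isOpen_approxSet (γ a : ℝ) (q : ℕ) : IsOpen (approxSet γ a q) := by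
  have hunion : approxSet γ a q = ⋃ n : ℤ, {x : ℝ | |q * x - γ - n| < a} := by
    ext x
    simp only [approxSet, Set.mem_ofPred_eq, Set.mem_iUnion, dnint_lt_iff]
  rw [hunion]
  exact isOpen_iUnion fun n => isOpen_lt (by fun_prop) continuous_const

lemma approxSet_zero (γ : ℝ) (q : ℕ) : approxSet γ 0 q = ∅ :=
  Set.eq_empty_of_forall_notMem fun _ => (dnint_nonneg _).not_gt

lemma volume_real_approxSet_le (hq : 0 < q) (ha : 0 ≤ a) (ha2 : a ≤ 1 / 2) (hℓ : 0 ≤ ℓ)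
    (haℓ : a / q ≤ ℓ / 2) (hℓq : 1 ≤ ℓ * q) :
    volume.real (approxSet γ a q ∩ Set.Ioo u (u + ℓ)) ≤ 18 * ℓ * a := by
  have hq' : (q : ℝ) ≠ 0 := by exact_mod_cast hq.ne'
  have hself := volume_real_inter_le_of_one_le (γ := γ) (u := u) hq hq ha ha hℓ haℓ hℓq
  rw [Set.inter_self, div_self hq'] at hself
  nlinarith [mul_nonneg hℓ ha]

lemma sub_sub_one_le_card_Icc_int (x y : ℝ) : y - x - 1 ≤ (Finset.Icc ⌈x⌉ ⌊y⌋).card := by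
  have hcard : (⌊y⌋ + 1 - ⌈x⌉ : ℝ) ≤ (Finset.Icc ⌈x⌉ ⌊y⌋).card := by
    rw [Int.card_Icc]
    exact_mod_cast Int.self_le_toNat _
  linarith [Int.ceil_lt_add_one x, Int.lt_floor_add_one y]

lemma disjoint_ball_centre (hq : 0 < q) (ha : a ≤ 1 / 2) {i j : ℤ} (hij : i ≠ j) :
    Disjoint (Metric.ball (centre γ q i) (a / q)) (Metric.ball (centre γ q j) (a / q)) := by
  refine Set.disjoint_left.2 fun x hi hj => hij ?_
  rw [Metric.mem_ball, Real.dist_eq, abs_sub_centre_lt_iff hq, abs_lt] at hi hj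
  have hlt : (i : ℝ) < j + 1 := by linarith
  have hgt : (j : ℝ) < i + 1 := by linarith
  norm_cast at hlt hgt
  omega

lemma ball_centre_subset (hq : 0 < q) {i : ℤ}
    (hi : i ∈ Finset.Icc ⌈q * u - γ + a⌉ ⌊q * (u + ℓ) - γ - a⌋) :
    Metric.ball (centre γ q i) (a / q) ⊆ approxSet γ a q ∩ Set.Ioo u (u + ℓ) := by
  have hq' : (0 : ℝ) < q := by exact_mod_cast hq
  intro x hx
  refine ⟨(mem_approxSet_iff hq).2 ⟨i, hx⟩, ?_⟩
  rw [Finset.mem_Icc, Int.ceil_le, Int.le_floor] at hi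
  rw [Metric.mem_ball, Real.dist_eq, abs_sub_centre_lt_iff hq, abs_lt] at hx
  constructor <;> refine lt_of_mul_lt_mul_left ?_ hq'.le <;> linarith

lemma le_volume_real_approxSet (hq : 0 < q) (ha : 0 ≤ a) (ha2 : a ≤ 1 / 2) (hℓq : 4 ≤ ℓ * q) :
    ℓ * a ≤ volume.real (approxSet γ a q ∩ Set.Ioo u (u + ℓ)) := by
  set G := Finset.Icc ⌈q * u - γ + a⌉ ⌊q * (u + ℓ) - γ - a⌋
  have hcard : ℓ * q / 2 ≤ G.card := by
    linarith [sub_sub_one_le_card_Icc_int (q * u - γ + a) (q * (u + ℓ) - γ - a)]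
  calc ℓ * a = ℓ * q / 2 * (2 * (a / q)) := by field_simp
    _ ≤ G.card * (2 * (a / q)) := by gcongr
    _ = ∑ i ∈ G, volume.real (Metric.ball (centre γ q i) (a / q)) := by
        rw [← nsmul_eq_mul]
        exact (Finset.sum_eq_card_nsmul fun i _ => Real.volume_real_ball (by positivity)).symm
    _ = volume.real (⋃ i ∈ G, Metric.ball (centre γ q i) (a / q)) :=
        (measureReal_biUnion_finset (fun i _ j _ hij => disjoint_ball_centre hq ha2 hij)
          (fun i _ => Metric.isOpen_ball.measurableSet) fun i _ => measure_ball_lt_top.ne).symm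
    _ ≤ volume.real (approxSet γ a q ∩ Set.Ioo u (u + ℓ)) :=
        measureReal_mono (Set.iUnion₂_subset fun i hi => ball_centre_subset hq hi)
          ((measure_mono Set.inter_subset_right).trans_lt measure_Ioo_lt_top).ne

end SingleSet

section ChungErdos

variable {α ι : Type*}

lemma sq_sum_indicator_one (s : Finset ι) (E : ι → Set α) (x : α) :
    (∑ i ∈ s, (E i).indicator 1 x : ℝ) ^ 2 =
      ∑ i ∈ s, ∑ j ∈ s, (E i ∩ E j).indicator 1 x := by
  rw [sq, Finset.sum_mul_sum]
  simp only [Set.inter_indicator_one, Pi.mul_apply]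

lemma two_mul_sum_indicator_one_le (s : Finset ι) (E : ι → Set α) (t : ℝ) (x : α) :
    2 * t * ∑ i ∈ s, (E i).indicator 1 x ≤
      t ^ 2 * (⋃ i ∈ s, E i).indicator 1 x + (∑ i ∈ s, (E i).indicator 1 x) ^ 2 := by
  by_cases hx : x ∈ ⋃ i ∈ s, E i
  · rw [Set.indicator_of_mem hx, Pi.one_apply]
    linarith [sq_nonneg (t - ∑ i ∈ s, (E i).indicator (1 : α → ℝ) x)]
  · have hzero : ∑ i ∈ s, (E i).indicator (1 : α → ℝ) x = 0 := Finset.sum_eq_zero fun i hi =>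
      Set.indicator_of_notMem (fun hxi => hx (Set.mem_biUnion hi hxi)) _
    simp [hzero, Set.indicator_of_notMem hx]

lemma sq_sum_measureReal_le [MeasurableSpace α] {μ : Measure α} (s : Finset ι) {E : ι → Set α}
    (hE : ∀ i, MeasurableSet (E i)) (hfin : ∀ i, μ (E i) ≠ ⊤) :
    (∑ i ∈ s, μ.real (E i)) ^ 2 ≤
      μ.real (⋃ i ∈ s, E i) * ∑ i ∈ s, ∑ j ∈ s, μ.real (E i ∩ E j) := by
  have hint : ∀ A : Set α, MeasurableSet A → μ A ≠ ⊤ →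
      Integrable (A.indicator (1 : α → ℝ)) μ := fun A hA hfin =>
    (integrable_indicator_iff hA).2 (integrableOn_const hfin)
  have hU : MeasurableSet (⋃ i ∈ s, E i) := Finset.measurableSet_biUnion s fun i _ => hE i
  have hUfin : μ (⋃ i ∈ s, E i) ≠ ⊤ :=
    ((measure_biUnion_finset_le s E).trans_lt (ENNReal.sum_lt_top.2 fun i _ => (hfin i).lt_top)).ne
  have hEE : ∀ i j, Integrable ((E i ∩ E j).indicator (1 : α → ℝ)) μ := fun i j =>
    hint _ ((hE i).inter (hE j)) (measure_ne_top_of_subset Set.inter_subset_left (hfin i))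
  have hEEs : ∀ i ∈ s, Integrable (fun x => ∑ j ∈ s, (E i ∩ E j).indicator (1 : α → ℝ) x) μ :=
    fun i _ => integrable_finsetSum _ fun j _ => hEE i j
  have hquad : ∀ t : ℝ, 2 * t * ∑ i ∈ s, μ.real (E i) ≤
      t ^ 2 * μ.real (⋃ i ∈ s, E i) + ∑ i ∈ s, ∑ j ∈ s, μ.real (E i ∩ E j) := by
    intro t
    have hle := integral_mono
      ((integrable_finsetSum s fun i _ => hint _ (hE i) (hfin i)).const_mul (2 * t))
      (((hint _ hU hUfin).const_mul (t ^ 2)).add (integrable_finsetSum s hEEs))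
      fun x => (two_mul_sum_indicator_one_le s E t x).trans_eq
        (congrArg _ (sq_sum_indicator_one s E x))
    rw [integral_const_mul, integral_finsetSum s fun i _ => hint _ (hE i) (hfin i),
      integral_add' ((hint _ hU hUfin).const_mul _) (integrable_finsetSum s hEEs),
      integral_const_mul, integral_indicator_one hU, integral_finsetSum s hEEs] at hle
    simpa only [integral_indicator_one (hE _), integral_finsetSum s fun j _ => hEE _ j,
      integral_indicator_one ((hE _).inter (hE _))] using hle
  have hdiscrim := discrim_le_zero (a := μ.real (⋃ i ∈ s, E i))
    (b := -(2 * ∑ i ∈ s, μ.real (E i))) (c := ∑ i ∈ s, ∑ j ∈ s, μ.real (E i ∩ E j))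
    fun t => by linarith [hquad t]
  rw [discrim] at hdiscrim
  linarith

lemma div_le_measureReal_biUnion [MeasurableSpace α] {μ : Measure α} {s : Finset ι}
    {E : ι → Set α} (hE : ∀ i, MeasurableSet (E i)) (hfin : ∀ i, μ (E i) ≠ ⊤) {a K S : ℝ}
    (ha : 0 < a) (hK : 0 < K) (hS : 1 ≤ S) (hlower : a * S ≤ ∑ i ∈ s, μ.real (E i))
    (hupper : ∑ i ∈ s, ∑ j ∈ s, μ.real (E i ∩ E j) ≤ K * a * (S + S ^ 2)) :
    a / (2 * K) ≤ μ.real (⋃ i ∈ s, E i) := by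
  have hcancel : a * (a * S ^ 2) ≤ μ.real (⋃ i ∈ s, E i) * (2 * K) * (a * S ^ 2) :=
    calc a * (a * S ^ 2) = (a * S) ^ 2 := by ring
      _ ≤ (∑ i ∈ s, μ.real (E i)) ^ 2 := by gcongr
      _ ≤ μ.real (⋃ i ∈ s, E i) * (K * a * (S + S ^ 2)) :=
          (sq_sum_measureReal_le s hE hfin).trans (by gcongr)
      _ ≤ μ.real (⋃ i ∈ s, E i) * (K * a * (S ^ 2 + S ^ 2)) := by
          gcongr
          exact le_self_pow₀ hS two_ne_zero
      _ = _ := by ring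
  exact (div_le_iff₀ (by positivity)).2 (le_of_mul_le_mul_right hcancel (by positivity))

lemma sum_sum_Ico_le {g : ℕ → ℕ → ℝ} (hg : ∀ i j, g i j = g j i) {φ : ℕ → ℝ} (hφ : ∀ q, 0 ≤ φ q)
    {K : ℝ} (hK : 0 ≤ K) {N : ℕ}
    (hrow : ∀ r, N ≤ r → ∑ q ∈ Finset.Ico N r, g q r ≤ K * φ r * (1 + ∑ q ∈ Finset.Ico N r, φ q))
    (hdiag : ∀ r, N ≤ r → g r r ≤ K * φ r) {n : ℕ} (hn : N ≤ n) :
    ∑ i ∈ Finset.Ico N n, ∑ j ∈ Finset.Ico N n, g i j ≤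
      3 * K * (∑ q ∈ Finset.Ico N n, φ q + (∑ q ∈ Finset.Ico N n, φ q) ^ 2) := by
  induction n, hn using Nat.le_induction with
  | base => simp
  | succ n hn ih =>
    have hS : 0 ≤ ∑ q ∈ Finset.Ico N n, φ q := Finset.sum_nonneg fun q _ => hφ q
    have hsplit : ∑ i ∈ Finset.Ico N (n + 1), ∑ j ∈ Finset.Ico N (n + 1), g i j =
        ∑ i ∈ Finset.Ico N n, ∑ j ∈ Finset.Ico N n, g i j +
          2 * ∑ q ∈ Finset.Ico N n, g q n + g n n := by
      simp only [Finset.sum_Ico_succ_top hn, Finset.sum_add_distrib, hg n]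
      ring
    rw [hsplit, Finset.sum_Ico_succ_top hn]
    have hr := hrow n hn
    have hd := hdiag n hn
    set S := ∑ q ∈ Finset.Ico N n, φ q
    have hKφ : 0 ≤ K * φ n := mul_nonneg hK (hφ n)
    nlinarith [mul_nonneg hKφ (hφ n), mul_nonneg hKφ hS]

end ChungErdos

section QuasiIndependence

/-- A weight `φ` of the size `C / (q (log log q) ^ 2)` for which the approximation sets of radius
`φ q / q` are quasi-independent in every interval of length `ℓ`: it lives on integers with few
divisors, and its sum over each block on which `logLog` is constant is at most `ℓ`. -/
structure RegularWeight (C ℓ : ℝ) (φ : ℕ → ℝ) : Prop where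
  nonneg : ∀ q, 0 ≤ φ q
  le : ∀ q, φ q ≤ C / (q * (logLog q : ℝ) ^ 2)
  card_divisors_le : ∀ q, φ q ≠ 0 → q.divisors.card ≤ q.size ^ 3
  block_sum_le : ∀ (j : ℕ) (T : Finset ℕ), (∀ q ∈ T, logLog q = j) → ∑ q ∈ T, φ q ≤ ℓ

variable {γ C ℓ u : ℝ} {φ : ℕ → ℝ} {q r : ℕ}

lemma sum_le_of_mul_self_le {S : Finset ℕ} {r : ℕ} (hS : ∀ q ∈ S, q * q ≤ r) :
    ∑ q ∈ S, q ≤ r := by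
  have hsub : S ⊆ Finset.range (r.sqrt + 1) := fun q hq =>
    Finset.mem_range.2 (Nat.lt_succ_of_le (Nat.le_sqrt.2 (hS q hq)))
  have hsum : (∑ q ∈ Finset.range (r.sqrt + 1), q) * 2 = (r.sqrt + 1) * r.sqrt :=
    Finset.sum_range_id_mul_two _
  have := Finset.sum_le_sum_of_subset hsub (f := id)
  simp only [id] at this
  nlinarith [Nat.sqrt_le r, Nat.le_mul_self r.sqrt]

lemma sum_volume_real_inter_le_of_mul_self_le (hφ : ∀ q, 0 ≤ φ q) (hℓ : 0 ≤ ℓ) (hr : 0 < r)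
    {S : Finset ℕ} (hS : ∀ q ∈ S, 1 ≤ ℓ * q ∧ φ q / q ≤ ℓ / 2 ∧ q * q ≤ r) :
    ∑ q ∈ S, volume.real (approxSet γ (φ q) q ∩ approxSet γ (φ r) r ∩ Set.Ioo u (u + ℓ)) ≤
      24 * ℓ * φ r * ∑ q ∈ S, φ q + 6 * ℓ * φ r := by
  have hr' : (0 : ℝ) < r := by exact_mod_cast hr
  have hsum : ∑ q ∈ S, (q : ℝ) ≤ r := by
    rw [← Nat.cast_sum]
    exact Nat.cast_le.2 (sum_le_of_mul_self_le fun q hq => (hS q hq).2.2)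
  calc ∑ q ∈ S, volume.real (approxSet γ (φ q) q ∩ approxSet γ (φ r) r ∩ Set.Ioo u (u + ℓ))
      ≤ ∑ q ∈ S, (24 * ℓ * (φ q * φ r) + 6 * ℓ * φ r * (q / r)) := by
        refine Finset.sum_le_sum fun q hq => ?_
        obtain ⟨hℓq, hrad, -⟩ := hS q hq
        have hq : 0 < q := Nat.pos_of_ne_zero fun h => by norm_num [h] at hℓq
        exact volume_real_inter_le_of_one_le hq hr (hφ q) (hφ r) hℓ hrad hℓq
    _ = 24 * ℓ * φ r * ∑ q ∈ S, φ q + 6 * ℓ * φ r * ((∑ q ∈ S, (q : ℝ)) / r) := by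
        rw [Finset.sum_add_distrib, Finset.sum_div, Finset.mul_sum, Finset.mul_sum]
        congr 1
        exact Finset.sum_congr rfl fun q _ => by ring
    _ ≤ 24 * ℓ * φ r * ∑ q ∈ S, φ q + 6 * ℓ * φ r := by
        have := mul_nonneg hℓ (hφ r)
        have := div_le_one_of_le₀ hsum hr'.le
        nlinarith

lemma RegularWeight.le_div (hφ : RegularWeight C ℓ φ) (hC : 0 ≤ C) (hq : 0 < q) :
    φ q ≤ C / q := by
  have hq' : (0 : ℝ) < q := by exact_mod_cast hq
  have hL : (1 : ℝ) ≤ logLog q := by exact_mod_cast logLog_pos hq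
  refine (hφ.le q).trans (div_le_div_of_nonneg_left hC hq' ?_)
  exact le_mul_of_one_le_right hq'.le (one_le_pow₀ hL)

lemma RegularWeight.sum_le_two_mul (hφ : RegularWeight C ℓ φ) {S : Finset ℕ}
    (hS : ∀ q ∈ S, q < r ∧ logLog r ≤ logLog q + 1) : ∑ q ∈ S, φ q ≤ 2 * ℓ := by
  rw [← Finset.sum_filter_add_sum_filter_not S fun q => logLog q = logLog r, two_mul]
  refine add_le_add (hφ.block_sum_le (logLog r) _ fun q hq => (Finset.mem_filter.1 hq).2)
    (hφ.block_sum_le (logLog r - 1) _ fun q hq => ?_)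
  obtain ⟨hqS, hne⟩ := Finset.mem_filter.1 hq
  have := logLog_mono (hS q hqS).1.le
  have := (hS q hqS).2
  omega

lemma RegularWeight.resonant (hφ : RegularWeight C ℓ φ) (hC : 0 ≤ C) (hq : 0 < q) (hqr : q < r)
    (hL : logLog r ≤ logLog q + 1)
    (hgap : centreGap γ q r < (r * φ q + q * φ r) / q.gcd r) : Resonant γ (5 * C) r q := by
  have hq' : (0 : ℝ) < q := by exact_mod_cast hq
  have hr' : (0 : ℝ) < r := hq'.trans (by exact_mod_cast hqr)
  have hLr : (0 : ℝ) < logLog r := by exact_mod_cast logLog_pos (hq.trans hqr)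
  have hLq : (0 : ℝ) < logLog q := by exact_mod_cast logLog_pos hq
  have hLqr : (logLog r : ℝ) ≤ 2 * logLog q := by
    have := logLog_pos hq
    exact_mod_cast (by omega : logLog r ≤ 2 * logLog q)
  have hφq : φ q ≤ 4 * C / (q * (logLog r : ℝ) ^ 2) :=
    calc φ q ≤ C / (q * (logLog q : ℝ) ^ 2) := hφ.le q
      _ = 4 * C / (q * (2 * logLog q : ℝ) ^ 2) := by field_simp; norm_num
      _ ≤ 4 * C / (q * (logLog r : ℝ) ^ 2) := by gcongr
  have hratio : (q : ℝ) / r ≤ r / q :=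
    ((div_le_one hr').2 (by exact_mod_cast hqr.le)).trans
      ((one_le_div hq').2 (by exact_mod_cast hqr.le))
  refine ⟨hq, hqr, hgap.trans_le ?_⟩
  calc (r * φ q + q * φ r) / (q.gcd r : ℝ)
      ≤ (r * (4 * C / (q * (logLog r : ℝ) ^ 2)) + q * (C / (r * (logLog r : ℝ) ^ 2))) /
          q.gcd r := by
        gcongr
        exact hφ.le r
    _ = (4 * C * (r / q) + C * (q / r)) / (q.gcd r * (logLog r : ℝ) ^ 2) := by field_simp
    _ ≤ (4 * C * (r / q) + C * (r / q)) / (q.gcd r * (logLog r : ℝ) ^ 2) := by gcongr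
    _ = 5 * C * (r / q) / (q.gcd r * (logLog r : ℝ) ^ 2) := by ring

lemma RegularWeight.sum_volume_real_inter_le_of_logLog_le (hφ : RegularWeight C ℓ φ) (hC : 0 ≤ C)
    (hℓ : 0 ≤ ℓ) (hℓ1 : ℓ ≤ 1) {B : ℝ}
    (hB : ∀ T : Finset ℕ, (∀ q ∈ T, Resonant γ (5 * C) r q) →
      ∑ q ∈ T, (2 * ℓ * (q.gcd r : ℝ) + 1) / r ≤ B)
    {S : Finset ℕ} (hS : ∀ q ∈ S, 0 < q ∧ q < r ∧ φ q / q ≤ ℓ / 2 ∧ logLog r ≤ logLog q + 1) :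
    ∑ q ∈ S, volume.real (approxSet γ (φ q) q ∩ approxSet γ (φ r) r ∩ Set.Ioo u (u + ℓ)) ≤
      96 * ℓ * φ r + 2 * φ r * B := by
  classical
  have hnear : ∑ q ∈ S, φ q ≤ 2 * ℓ :=
    hφ.sum_le_two_mul fun q hq => ⟨(hS q hq).2.1, (hS q hq).2.2.2⟩
  have hres : ∑ q ∈ S with centreGap γ q r < (r * φ q + q * φ r) / q.gcd r,
      (2 * ℓ * (q.gcd r : ℝ) + 1) / r ≤ B := hB _ fun q hq => by
    obtain ⟨hqS, hgap⟩ := Finset.mem_filter.1 hq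
    obtain ⟨hq0, hqr, -, hL⟩ := hS q hqS
    exact hφ.resonant hC hq0 hqr hL hgap
  calc ∑ q ∈ S, volume.real (approxSet γ (φ q) q ∩ approxSet γ (φ r) r ∩ Set.Ioo u (u + ℓ))
      ≤ ∑ q ∈ S, (48 * (φ q * φ r) + 2 * φ r *
          if centreGap γ q r < (r * φ q + q * φ r) / q.gcd r then
            (2 * ℓ * q.gcd r + 1) / r else 0) := by
        refine Finset.sum_le_sum fun q hq => ?_
        obtain ⟨hq0, hqr, hrad, -⟩ := hS q hq
        exact volume_real_inter_le_gcd hq0 (hq0.trans hqr) (hφ.nonneg q) (hφ.nonneg r) hℓ hℓ1 hrad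
    _ = 48 * φ r * ∑ q ∈ S, φ q + 2 * φ r *
          ∑ q ∈ S with centreGap γ q r < (r * φ q + q * φ r) / q.gcd r,
            (2 * ℓ * (q.gcd r : ℝ) + 1) / r := by
        rw [Finset.sum_add_distrib, ← Finset.mul_sum, ← Finset.mul_sum, Finset.sum_filter,
          ← Finset.sum_mul]
        ring
    _ ≤ 48 * φ r * (2 * ℓ) + 2 * φ r * B := by
        have := hφ.nonneg r
        gcongr
    _ = 96 * ℓ * φ r + 2 * φ r * B := by ring

lemma RegularWeight.div_le (hφ : RegularWeight C ℓ φ) (hC : 0 ≤ C) (hq : 0 < q)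
    (hCq : C / q ≤ ℓ / 2) : φ q ≤ ℓ / 2 ∧ φ q / q ≤ ℓ / 2 := by
  have hle := (hφ.le_div hC hq).trans hCq
  exact ⟨hle, (div_le_self (hφ.nonneg q) (by exact_mod_cast hq)).trans hle⟩

lemma QuasipolyDiophantine.eventually_sum_volume_real_inter_le (hγ : QuasipolyDiophantine γ)
    (hC : 0 ≤ C) (hℓ : 0 < ℓ) (hℓ1 : ℓ ≤ 1) : ∀ᶠ N : ℕ in atTop, ∀ φ : ℕ → ℝ,
      RegularWeight C ℓ φ → ∀ (u : ℝ) (r : ℕ), N ≤ r →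
        ∑ q ∈ Finset.Ico N r,
            volume.real (approxSet γ (φ q) q ∩ approxSet γ (φ r) r ∩ Set.Ioo u (u + ℓ)) ≤
          (1000 * C + 106) * ℓ * φ r * (1 + ∑ q ∈ Finset.Ico N r, φ q) := by
  have hrad := eventually_div_le tendsto_id C (half_pos hℓ)
  have hlarge := eventually_div_le tendsto_id 1 hℓ
  filter_upwards [eventually_forall_ge_atTop.2
    (hγ.eventually_sum_resonant_le (mul_nonneg (by norm_num : (0 : ℝ) ≤ 5) hC) hℓ hℓ1),
    eventually_forall_ge_atTop.2 (hrad.and hlarge), eventually_gt_atTop 0]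
    with N hres hN hN0 φ hφ u r hNr
  have hS : 0 ≤ ∑ q ∈ Finset.Ico N r, φ q := Finset.sum_nonneg fun q _ => hφ.nonneg q
  rcases eq_or_ne (φ r) 0 with hφr | hφr
  · simp [hφr, approxSet_zero]
  have hφr0 := hφ.nonneg r
  rw [← Finset.sum_filter_add_sum_filter_not _ fun q => logLog r ≤ logLog q + 1]
  have hnear := hφ.sum_volume_real_inter_le_of_logLog_le hC hℓ.le hℓ1 (u := u)
    (hres r hNr (hφ.card_divisors_le r hφr))
    (S := (Finset.Ico N r).filter fun q => logLog r ≤ logLog q + 1) fun q hq => by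
      obtain ⟨hq, hL⟩ := Finset.mem_filter.1 hq
      obtain ⟨hNq, hqr⟩ := Finset.mem_Ico.1 hq
      exact ⟨hN0.trans_le hNq, hqr, (hφ.div_le hC (hN0.trans_le hNq) (hN q hNq).1).2, hL⟩
  have hsparse := sum_volume_real_inter_le_of_mul_self_le (γ := γ) (u := u) hφ.nonneg hℓ.le
    (hN0.trans_le hNr) (S := (Finset.Ico N r).filter fun q => ¬ logLog r ≤ logLog q + 1)
    fun q hq => by
      obtain ⟨hq, hL⟩ := Finset.mem_filter.1 hq
      obtain ⟨hNq, -⟩ := Finset.mem_Ico.1 hq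
      have hq0 := hN0.trans_le hNq
      refine ⟨?_, (hφ.div_le hC hq0 (hN q hNq).1).2,
        (mul_self_lt_of_logLog_add_one_lt (not_le.1 hL)).le⟩
      exact (div_le_iff₀ (by exact_mod_cast hq0)).1 (hN q hNq).2
  have hsub : ∑ q ∈ Finset.Ico N r with ¬ logLog r ≤ logLog q + 1, φ q ≤
      ∑ q ∈ Finset.Ico N r, φ q :=
    Finset.sum_le_sum_of_subset_of_nonneg (Finset.filter_subset _ _) fun q _ _ => hφ.nonneg q
  have hℓφ : 0 ≤ ℓ * φ r := mul_nonneg hℓ.le hφr0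
  nlinarith [mul_nonneg hℓφ hC, mul_nonneg hℓφ hS, mul_nonneg (mul_nonneg hℓφ hC) hS,
    mul_le_mul_of_nonneg_left hsub hℓφ]

lemma QuasipolyDiophantine.eventually_le_volume_real_biUnion (hγ : QuasipolyDiophantine γ)
    (hC : 0 ≤ C) (hℓ : 0 < ℓ) (hℓ1 : ℓ ≤ 1) : ∀ᶠ N : ℕ in atTop, ∀ φ : ℕ → ℝ,
      RegularWeight C ℓ φ → ∀ (u : ℝ) (n : ℕ), N ≤ n → 1 ≤ ∑ q ∈ Finset.Ico N n, φ q →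
        ℓ / (6 * (1000 * C + 106)) ≤
          volume.real (⋃ q ∈ Finset.Ico N n, approxSet γ (φ q) q ∩ Set.Ioo u (u + ℓ)) := by
  have hrad := eventually_div_le tendsto_id C (half_pos hℓ)
  have hlarge := eventually_div_le tendsto_id 4 hℓ
  filter_upwards [hγ.eventually_sum_volume_real_inter_le hC hℓ hℓ1,
    eventually_forall_ge_atTop.2 (hrad.and hlarge), eventually_gt_atTop 0]
    with N hrow hN hN0 φ hφ u n hNn hS
  set E : ℕ → Set ℝ := fun q => approxSet γ (φ q) q ∩ Set.Ioo u (u + ℓ)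
  set S := ∑ q ∈ Finset.Ico N n, φ q with hSdef
  have hbasic : ∀ q, N ≤ q → 0 < q ∧ φ q ≤ 1 / 2 ∧ φ q / q ≤ ℓ / 2 ∧ 4 ≤ ℓ * q := fun q hNq => by
    have hq := hN0.trans_le hNq
    obtain ⟨hφq, hrad⟩ := hφ.div_le hC hq (hN q hNq).1
    exact ⟨hq, by linarith, hrad, (div_le_iff₀ (by exact_mod_cast hq)).1 (hN q hNq).2⟩
  have hlower : ℓ * S ≤ ∑ q ∈ Finset.Ico N n, volume.real (E q) := by
    rw [hSdef, Finset.mul_sum]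
    refine Finset.sum_le_sum fun q hq => ?_
    obtain ⟨hq0, hφq, -, hℓq⟩ := hbasic q (Finset.mem_Ico.1 hq).1
    exact le_volume_real_approxSet hq0 (hφ.nonneg q) hφq hℓq
  have hupper := sum_sum_Ico_le (g := fun i j => volume.real (E i ∩ E j))
    (fun i j => by rw [Set.inter_comm]) hφ.nonneg (K := (1000 * C + 106) * ℓ) (by positivity)
    (fun r hr => by
      simp only [E, ← Set.inter_inter_distrib_right]
      exact hrow φ hφ u r hr)
    (fun r hr => by
      obtain ⟨hr0, hφr, hrad, hℓr⟩ := hbasic r hr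
      rw [Set.inter_self]
      refine (volume_real_approxSet_le hr0 (hφ.nonneg r) hφr hℓ.le hrad (by linarith)).trans ?_
      have := hφ.nonneg r
      gcongr
      linarith) hNn
  have hunion := div_le_measureReal_biUnion (s := Finset.Ico N n)
    (fun q => (isOpen_approxSet γ (φ q) q).measurableSet.inter measurableSet_Ioo)
    (fun q => measure_ne_top_of_subset (Set.inter_subset_right (s := approxSet γ (φ q) q))
      (measure_Ioo_lt_top (μ := volume) (a := u) (b := u + ℓ)).ne)
    hℓ (K := 3 * (1000 * C + 106)) (by positivity) hS hlower (hupper.trans_eq (by ring))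
  exact le_of_eq_of_le (by ring) hunion

end QuasiIndependence

section Truncation

variable {ι κ : Type*} {f : ι → ℝ} {b : ι → κ}

lemma summable_of_sum_fiber_le {D : κ → ℝ} (hf : ∀ i, 0 ≤ f i) (hD : Summable D)
    (h : ∀ (k : κ) (T : Finset ι), (∀ i ∈ T, b i = k) → ∑ i ∈ T, f i ≤ D k) : Summable f := by
  classical
  refine summable_of_sum_le (c := ∑' k, D k) hf fun T => ?_
  calc ∑ i ∈ T, f i = ∑ k ∈ T.image b, ∑ i ∈ T with b i = k, f i :=
        (Finset.sum_fiberwise_of_maps_to (fun i hi => Finset.mem_image_of_mem b hi) f).symm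
    _ ≤ ∑ k ∈ T.image b, D k :=
        Finset.sum_le_sum fun k _ => h k _ fun i hi => (Finset.mem_filter.1 hi).2
    _ ≤ ∑' k, D k := hD.sum_le_tsum _ fun k _ => by simpa using h k ∅

lemma exists_not_summable_sum_fiber_le {ℓ : ℝ} (hb : ∀ k, (b ⁻¹' {k}).Finite)
    (hf : ∀ i, 0 ≤ f i) (hns : ¬Summable f) (hℓ : 0 < ℓ) :
    ∃ g : ι → ℝ, (∀ i, 0 ≤ g i) ∧ (∀ i, g i ≤ f i) ∧ ¬Summable g ∧
      ∀ (k : κ) (T : Finset ι), (∀ i ∈ T, b i = k) → ∑ i ∈ T, g i ≤ ℓ := by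
  classical
  set F : κ → Finset ι := fun k => (hb k).toFinset
  have hF : ∀ {i k}, i ∈ F k ↔ b i = k := fun {i k} => by simp [F]
  set s : κ → ℝ := fun k => ∑ i ∈ F k, f i
  have hmax : ∀ k, 0 < max ℓ (s k) := fun k => lt_max_of_lt_left hℓ
  set g : ι → ℝ := fun i => f i * (ℓ / max ℓ (s (b i)))
  have hg0 : ∀ i, 0 ≤ g i := fun i => mul_nonneg (hf i) (div_nonneg hℓ.le (hmax _).le)
  have hgsum : ∀ k, ∑ i ∈ F k, g i = s k * (ℓ / max ℓ (s k)) := fun k => by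
    rw [Finset.sum_mul]
    exact Finset.sum_congr rfl fun i hi => by simp only [g, hF.1 hi]
  refine ⟨g, hg0, fun i => mul_le_of_le_one_right (hf i)
    ((div_le_one (hmax _)).2 (le_max_left _ _)), fun hg => hns ?_, fun k T hT => ?_⟩
  · obtain ⟨t, ht⟩ := summable_iff_vanishing_norm.1 hg ℓ hℓ
    have hagree : ∀ i, b i ∉ t.image b → g i = f i := fun i hi => by
      have hdisj : Disjoint (F (b i)) t := Finset.disjoint_left.2 fun p hp hpt =>
        hi (hF.1 hp ▸ Finset.mem_image_of_mem b hpt)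
      have hlt : s (b i) * (ℓ / max ℓ (s (b i))) < ℓ :=
        hgsum _ ▸ (le_abs_self _).trans_lt (ht _ hdisj)
      have hs : s (b i) ≤ ℓ := by
        by_contra! hs
        rw [max_eq_right hs.le, mul_div_cancel₀ _ (hℓ.trans hs).ne'] at hlt
        exact lt_irrefl _ hlt
      simp only [g, max_eq_left hs, div_self hℓ.ne', mul_one]
    have hfin : {i | g i ≠ f i}.Finite :=
      ((t.image b).finite_toSet.biUnion fun k _ => hb k).subset fun i hi =>
        Set.mem_biUnion (not_imp_comm.1 (hagree i) hi) rfl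
    exact (summable_congr_cofinite (eventually_cofinite.2 hfin)).1 hg
  · calc ∑ i ∈ T, g i ≤ ∑ i ∈ F k, g i :=
          Finset.sum_le_sum_of_subset_of_nonneg (fun i hi => hF.2 (hT i hi)) fun i _ _ => hg0 i
      _ = s k / max ℓ (s k) * ℓ := by rw [hgsum]; ring
      _ ≤ ℓ := mul_le_of_le_one_left hℓ.le ((div_le_one (hmax k)).2 (le_max_right _ _))

lemma sum_card_divisors_le {N : ℕ} {T : Finset ℕ} (hN : 0 < N) (hT : ∀ q ∈ T, q ≤ N) :
    ∑ q ∈ T, (q.divisors.card : ℝ) ≤ N * (1 + Real.log N) := by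
  have hswap : ∑ q ∈ T, q.divisors.card ≤ ∑ d ∈ Finset.Icc 1 N, N / d := by
    calc ∑ q ∈ T, q.divisors.card ≤ ∑ q ∈ Finset.Ioc 0 N, q.divisors.card :=
          Finset.sum_le_sum_of_ne_zero fun q hq hne =>
            Finset.mem_Ioc.2 ⟨Nat.pos_of_ne_zero fun h0 => hne (by simp [h0]), hT q hq⟩
      _ = ∑ d ∈ Finset.Icc 1 N, N / d := by
          simpa only [ArithmeticFunction.sigma_zero_apply,
            ← Finset.Icc_add_one_left_eq_Ioc, zero_add] using
            ArithmeticFunction.sum_Ioc_sigma0_eq_sum_div N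
  calc ∑ q ∈ T, (q.divisors.card : ℝ) ≤ ∑ d ∈ Finset.Icc 1 N, ((N / d : ℕ) : ℝ) := by
        exact_mod_cast hswap
    _ ≤ ∑ d ∈ Finset.Icc 1 N, N * (d : ℝ)⁻¹ := Finset.sum_le_sum fun d _ => Nat.cast_div_le
    _ ≤ N * (1 + Real.log N) := by
        rw [← Finset.mul_sum]
        gcongr
        simpa using sum_Icc_inv_le one_pos hN

variable {C : ℝ} {Ψ : ℕ → ℝ}

lemma sum_card_divisors_le_of_size_eq {k : ℕ} {T : Finset ℕ} (hT : ∀ q ∈ T, q.size = k) :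
    ∑ q ∈ T, (q.divisors.card : ℝ) ≤ 2 ^ k * (1 + k) := by
  refine (sum_card_divisors_le k.two_pow_pos fun q hq =>
    (hT q hq ▸ Nat.lt_size_self q).le).trans ?_
  push_cast
  rw [Real.log_pow]
  gcongr
  exact mul_le_of_le_one_right k.cast_nonneg (by linarith [Real.log_two_lt_d9])

lemma summable_indicator_size_pow_lt_card_divisors (hC : 0 ≤ C) (hΨ0 : ∀ q, 0 ≤ Ψ q)
    (hΨ : ∀ q, Ψ q ≤ C / q) :
    Summable ({q : ℕ | q.size ^ 3 < q.divisors.card}.indicator Ψ) := by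
  set R := {q : ℕ | q.size ^ 3 < q.divisors.card}
  have hpoint : R.indicator Ψ ≤
      fun q => 2 * C / (2 ^ q.size * (q.size : ℝ) ^ 3) * q.divisors.card := by
    refine Set.indicator_le' (fun q hq => ?_) fun q _ => by positivity
    rcases q.eq_zero_or_pos with rfl | hq0
    · simpa using hΨ 0
    · have hpow : (2 : ℝ) ^ q.size ≤ 2 * q := by exact_mod_cast two_pow_size_le hq0
      have hsize : (0 : ℝ) < q.size := by exact_mod_cast Nat.size_pos.2 hq0
      have hcard : (q.size : ℝ) ^ 3 ≤ q.divisors.card := by exact_mod_cast le_of_lt hq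
      calc Ψ q ≤ 2 * C / (2 * q) := (hΨ q).trans_eq (by field_simp)
        _ ≤ 2 * C / 2 ^ q.size := by gcongr
        _ = 2 * C / (2 ^ q.size * (q.size : ℝ) ^ 3) * (q.size : ℝ) ^ 3 := by field_simp
        _ ≤ _ := by gcongr
  have hsummable : Summable fun k : ℕ => 4 * C * ((k : ℝ) ^ 2)⁻¹ :=
    (Real.summable_nat_pow_inv.2 one_lt_two).mul_left _
  refine summable_of_sum_fiber_le (b := Nat.size) (Set.indicator_nonneg fun q _ => hΨ0 q)
    hsummable fun k T hT => ?_
  calc ∑ q ∈ T, R.indicator Ψ q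
      ≤ ∑ q ∈ T, 2 * C / (2 ^ k * (k : ℝ) ^ 3) * q.divisors.card :=
        Finset.sum_le_sum fun q hq => hT q hq ▸ hpoint q
    _ ≤ 2 * C / (2 ^ k * (k : ℝ) ^ 3) * (2 ^ k * (1 + k)) := by
        rw [← Finset.mul_sum]
        gcongr
        exact sum_card_divisors_le_of_size_eq hT
    _ ≤ 4 * C * ((k : ℝ) ^ 2)⁻¹ := by
        rcases k.eq_zero_or_pos with rfl | hk
        · simp
        · have hk' : (1 : ℝ) ≤ k := by exact_mod_cast hk
          calc _ ≤ 2 * C / (2 ^ k * (k : ℝ) ^ 3) * (2 ^ k * (k + k)) := by gcongr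
            _ = _ := by field_simp; ring

end Truncation

section Density

lemma le_measure_limsup_inter {α : Type*} [MeasurableSpace α] {μ : Measure α} {s : ℕ → Set α}
    {t : Set α} {c : ENNReal} (hs : ∀ n, MeasurableSet (s n)) (ht : MeasurableSet t)
    (htop : μ t ≠ ⊤) (h : ∀ N, c ≤ μ ((⋃ n ≥ N, s n) ∩ t)) : c ≤ μ (limsup s atTop ∩ t) := by
  have hlimsup : limsup s atTop = ⋂ N, ⋃ n ≥ N, s n := limsup_eq_iInf_iSup_of_nat
  have hanti : Antitone fun N => (⋃ n ≥ N, s n) ∩ t := fun M N hMN =>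
    Set.inter_subset_inter_left _ (Set.biUnion_subset_biUnion_left fun _ hn => hMN.trans hn)
  have hmeas : ∀ N, MeasurableSet ((⋃ n ≥ N, s n) ∩ t) := fun N =>
    (MeasurableSet.biUnion (Set.to_countable _) fun n _ => hs n).inter ht
  rw [hlimsup, Set.iInter_inter, hanti.measure_iInter (fun N => (hmeas N).nullMeasurableSet)
    ⟨0, measure_ne_top_of_subset Set.inter_subset_right htop⟩]
  exact le_iInf h

lemma ae_mem_of_le_volume_inter_Ioo {G : Set ℝ} {κ : ℝ} (hG : MeasurableSet G) (hκ : 0 < κ)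
    (h : ∀ ℓ : ℝ, 0 < ℓ → ℓ ≤ 1 → ∀ u, ENNReal.ofReal (κ * ℓ) ≤ volume (G ∩ Set.Ioo u (u + ℓ))) :
    ∀ᵐ x, x ∈ G := by
  filter_upwards [Besicovitch.ae_tendsto_measure_inter_div_of_measurableSet volume hG] with x hx
  by_contra hxG
  rw [Set.indicator_of_notMem hxG] at hx
  have hdensity : ∀ᶠ r in nhdsWithin (0 : ℝ) (Set.Ioi 0), ENNReal.ofReal κ ≤
      volume (G ∩ Metric.closedBall x r) / volume (Metric.closedBall x r) := by
    filter_upwards [Ioo_mem_nhdsGT (one_half_pos (α := ℝ))] with r ⟨hr0, hr1⟩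
    rw [Real.volume_closedBall, ENNReal.le_div_iff_mul_le (Or.inl (by simp [hr0]))
      (Or.inl ENNReal.ofReal_ne_top), ← ENNReal.ofReal_mul hκ.le]
    refine (h (2 * r) (by linarith) (by linarith) (x - r)).trans (measure_mono ?_)
    rw [Real.closedBall_eq_Icc, show x - r + 2 * r = x + r by ring]
    exact Set.inter_subset_inter_right _ Set.Ioo_subset_Icc_self
  have hκ0 := ge_of_tendsto hx hdensity
  simp only [nonpos_iff_eq_zero, ENNReal.ofReal_eq_zero] at hκ0
  exact hκ.not_ge hκ0

end Density

section Khinchin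

variable {γ C : ℝ} {Ψ : ℕ → ℝ}

lemma exists_regularWeight {ℓ : ℝ} (hC : 0 ≤ C) (hℓ : 0 < ℓ) (hΨ0 : ∀ q, 0 ≤ Ψ q)
    (hΨ : ∀ q, Ψ q ≤ C / (q * (logLog q : ℝ) ^ 2)) (hns : ¬Summable Ψ) :
    ∃ φ, RegularWeight C ℓ φ ∧ (∀ q, φ q ≤ Ψ q) ∧ ¬Summable φ := by
  set R := {q : ℕ | q.size ^ 3 < q.divisors.card}
  have hΨC : ∀ q, Ψ q ≤ C / q := fun q => by
    refine (hΨ q).trans ?_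
    rcases q.eq_zero_or_pos with rfl | hq
    · simp
    · have hlogLog : (1 : ℝ) ≤ logLog q := by exact_mod_cast logLog_pos hq
      have hq' : (0 : ℝ) < q := by exact_mod_cast hq
      exact div_le_div_of_nonneg_left hC hq'
        (le_mul_of_one_le_right hq'.le (one_le_pow₀ hlogLog))
  have hns' : ¬Summable (Rᶜ.indicator Ψ) := fun h => hns <|
    Set.indicator_self_add_compl R Ψ ▸
      (summable_indicator_size_pow_lt_card_divisors hC hΨ0 hΨC).add h
  have hfibre : ∀ k, (logLog ⁻¹' {k}).Finite := fun k => by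
    have := tendsto_logLog_atTop.eventually_ne_atTop k
    rw [← Nat.cofinite_eq_atTop] at this
    simpa [eventually_cofinite, Set.preimage] using this
  obtain ⟨φ, hφ0, hφΨ, hφns, hblock⟩ := exists_not_summable_sum_fiber_le hfibre
    (Set.indicator_nonneg fun q _ => hΨ0 q) hns' hℓ
  have hle : ∀ q, φ q ≤ Ψ q := fun q =>
    (hφΨ q).trans (Set.indicator_le_self' (fun _ _ => hΨ0 _) q)
  refine ⟨φ, ⟨hφ0, fun q => (hle q).trans (hΨ q), fun q hq => ?_, hblock⟩, hle, hφns⟩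
  by_contra! hlt
  exact hq (le_antisymm ((hφΨ q).trans_eq (Set.indicator_of_notMem (not_not.2 hlt) _)) (hφ0 q))

lemma QuasipolyDiophantine.le_volume_limsup_inter (hγ : QuasipolyDiophantine γ) (hC : 0 ≤ C)
    (hΨ0 : ∀ q, 0 ≤ Ψ q) (hΨ : ∀ q, Ψ q ≤ C / (q * (logLog q : ℝ) ^ 2)) (hns : ¬Summable Ψ)
    {ℓ : ℝ} (hℓ : 0 < ℓ) (hℓ1 : ℓ ≤ 1) (u : ℝ) :
    ENNReal.ofReal (ℓ / (6 * (1000 * C + 106))) ≤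
      volume (limsup (fun q => approxSet γ (Ψ q) q) atTop ∩ Set.Ioo u (u + ℓ)) := by
  refine le_measure_limsup_inter (fun q => (isOpen_approxSet γ (Ψ q) q).measurableSet)
    measurableSet_Ioo measure_Ioo_lt_top.ne fun M => ?_
  obtain ⟨φ, hφ, hφΨ, hφns⟩ := exists_regularWeight hC hℓ hΨ0 hΨ hns
  obtain ⟨N, hN, hMN⟩ := ((hγ.eventually_le_volume_real_biUnion hC hℓ hℓ1).and
    (eventually_ge_atTop M)).exists
  obtain ⟨n, hsum, hNn⟩ := (((not_summable_iff_tendsto_nat_atTop_of_nonneg hφ.nonneg).1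
    hφns).eventually_ge_atTop (1 + ∑ q ∈ Finset.range N, φ q) |>.and
    (eventually_ge_atTop N)).exists
  rw [← Finset.sum_range_add_sum_Ico _ hNn, add_comm, add_le_add_iff_left] at hsum
  have hsubset : (⋃ q ∈ Finset.Ico N n, approxSet γ (φ q) q ∩ Set.Ioo u (u + ℓ)) ⊆
      (⋃ q ≥ M, approxSet γ (Ψ q) q) ∩ Set.Ioo u (u + ℓ) := by
    refine Set.iUnion₂_subset fun q hq => Set.inter_subset_inter_left _ fun x hx => ?_
    exact Set.mem_biUnion (hMN.trans (Finset.mem_Ico.1 hq).1) (lt_of_lt_of_le hx (hφΨ q))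
  calc ENNReal.ofReal (ℓ / (6 * (1000 * C + 106)))
      ≤ ENNReal.ofReal (volume.real (⋃ q ∈ Finset.Ico N n,
          approxSet γ (φ q) q ∩ Set.Ioo u (u + ℓ))) :=
        ENNReal.ofReal_le_ofReal (hN φ hφ u n hNn hsum)
    _ ≤ volume (⋃ q ∈ Finset.Ico N n, approxSet γ (φ q) q ∩ Set.Ioo u (u + ℓ)) :=
        ENNReal.ofReal_toReal_le
    _ ≤ _ := measure_mono hsubset

lemma QuasipolyDiophantine.ae_mem_limsup_approxSet (hγ : QuasipolyDiophantine γ) (hC : 0 ≤ C)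
    (hΨ0 : ∀ q, 0 ≤ Ψ q) (hΨ : ∀ q, Ψ q ≤ C / (q * (logLog q : ℝ) ^ 2)) (hns : ¬Summable Ψ) :
    ∀ᵐ x, x ∈ limsup (fun q => approxSet γ (Ψ q) q) atTop := by
  refine ae_mem_of_le_volume_inter_Ioo (κ := (6 * (1000 * C + 106))⁻¹)
    (.measurableSet_limsup fun q => (isOpen_approxSet γ (Ψ q) q).measurableSet) (by positivity)
    fun ℓ hℓ hℓ1 u => ?_
  rw [inv_mul_eq_div]
  exact hγ.le_volume_limsup_inter hC hΨ0 hΨ hns hℓ hℓ1 u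

end Khinchin

section Multiplicative

lemma logLog_le_three_mul_logb_logb {q : ℕ} (hq : 4 ≤ q) :
    (logLog q : ℝ) ≤ 3 * Real.logb 2 (Real.logb 2 q) := by
  have hq0 : 0 < q := by omega
  set L := Real.logb 2 q with hLdef
  have hq4 : (2 : ℝ) ^ (2 : ℝ) ≤ q := by
    rw [Real.rpow_two]
    exact_mod_cast hq
  have hL : 2 ≤ L := (Real.le_logb_iff_rpow_le one_lt_two (by positivity)).2 hq4
  have hLL : 1 ≤ Real.logb 2 L :=
    (Real.le_logb_iff_rpow_le one_lt_two (by linarith)).2 (by simpa using hL)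
  have hsize : (q.size : ℝ) ≤ 1 + L := by
    rw [← Real.logb_self_eq_one one_lt_two, hLdef, ← Real.logb_mul two_ne_zero (by positivity),
      Real.le_logb_iff_rpow_le one_lt_two (by positivity), Real.rpow_natCast]
    exact_mod_cast two_pow_size_le hq0
  have hpow : (2 : ℝ) ^ logLog q ≤ 4 * L :=
    calc (2 : ℝ) ^ logLog q ≤ 2 * q.size := by exact_mod_cast two_pow_logLog_le hq0
      _ ≤ 4 * L := by linarith
  calc (logLog q : ℝ) ≤ Real.logb 2 (2 ^ 2 * L) := by
        rw [Real.le_logb_iff_rpow_le one_lt_two (by positivity), Real.rpow_natCast]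
        linarith
    _ = 2 + Real.logb 2 L := by
        rw [Real.logb_mul (by positivity) (by positivity), Real.logb_pow,
          Real.logb_self_eq_one one_lt_two]
        norm_num
    _ ≤ 3 * Real.logb 2 L := by linarith

lemma div_le_of_inv_logb_le {C a d : ℝ} {q : ℕ} (hC : 0 ≤ C) (hq : 4 ≤ q) (ha0 : 0 ≤ a)
    (hd : (Real.logb 2 q)⁻¹ ≤ d)
    (ha : a ≤ C / (q * Real.logb 2 q * Real.logb 2 (Real.logb 2 q) ^ 2)) :
    a / d ≤ 9 * C / (q * (logLog q : ℝ) ^ 2) := by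
  have hq0 : 0 < q := by omega
  have hL : 0 < Real.logb 2 q := Real.logb_pos one_lt_two (by exact_mod_cast (by omega : 1 < q))
  have hlogLog : (0 : ℝ) < logLog q := by exact_mod_cast logLog_pos hq0
  have hLL : (logLog q : ℝ) / 3 ≤ Real.logb 2 (Real.logb 2 q) := by
    linarith [logLog_le_three_mul_logb_logb hq]
  calc a / d ≤ a / (Real.logb 2 q)⁻¹ := by gcongr
    _ = a * Real.logb 2 q := div_inv_eq_mul _ _
    _ ≤ C / (q * Real.logb 2 q * Real.logb 2 (Real.logb 2 q) ^ 2) * Real.logb 2 q := by gcongr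
    _ = C / (q * Real.logb 2 (Real.logb 2 q) ^ 2) := by
        have : Real.logb 2 (Real.logb 2 q) ≠ 0 := by linarith
        field_simp
    _ ≤ C / (q * (logLog q / 3 : ℝ) ^ 2) := by gcongr
    _ = 9 * C / (q * (logLog q : ℝ) ^ 2) := by field_simp; norm_num

lemma not_summable_indicator_of_tendsto_sum_filter {f : ℕ → ℝ} {p : ℕ → Prop} [DecidablePred p]
    (hdiv : Tendsto (fun Q => ∑ q ∈ Finset.Icc 1 Q with p q, f q) atTop atTop) (M : ℕ) :
    ¬Summable ({q | M ≤ q ∧ p q}.indicator f) := by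
  intro h
  set g := {q | 1 ≤ q ∧ p q}.indicator f
  have hg : Summable g := by
    refine (summable_congr_cofinite ?_).1 h
    rw [Nat.cofinite_eq_atTop]
    filter_upwards [eventually_ge_atTop M, eventually_ge_atTop 1] with q hM h1
    simp only [g, Set.indicator, Set.mem_ofPred_eq, hM, h1, true_and]
  have hsum : ∀ Q, ∑ q ∈ Finset.range (Q + 1), g q = ∑ q ∈ Finset.Icc 1 Q with p q, f q := by
    classical
    intro Q
    rw [Finset.sum_indicator_eq_sum_filter]
    refine Finset.sum_congr (Finset.ext fun q => ?_) fun _ _ => rfl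
    simp [and_left_comm, and_assoc]
  refine not_tendsto_nhds_of_tendsto_atTop hdiv (∑' q, g q) ?_
  simpa only [← hsum] using (tendsto_add_atTop_iff_nat 1).2 hg.hasSum.tendsto_sum_nat

end Multiplicative

open Classical in
theorem stmt2_general (γ₁ : ℝ) (hγ₁ : QuasipolyDiophantine γ₁)
    (δ ψ : ℕ → ℝ) (hψ0 : ∀ q, 0 ≤ ψ q)
    (hO : ∃ C > (0 : ℝ), ∀ q : ℕ, 3 ≤ q →
      ψ q ≤ C / ((q : ℝ) * Real.logb 2 q * (Real.logb 2 (Real.logb 2 q)) ^ 2))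
    (hdiv : Tendsto (fun Q : ℕ => ∑ q ∈ (Finset.Icc 1 Q).filter
        (fun q : ℕ => (Real.logb 2 q)⁻¹ ≤ δ q), ψ q / δ q) atTop atTop) :
    volume {x ∈ Set.Icc (0 : ℝ) 1 |
      {q : ℕ | 0 < q ∧ dnint (q * x - γ₁) * δ q < ψ q}.Infinite} = 1 := by
  obtain ⟨C, hC, hO⟩ := hO
  set S := {q : ℕ | 4 ≤ q ∧ (Real.logb 2 q)⁻¹ ≤ δ q}
  set Ψ := S.indicator fun q => ψ q / δ q
  have hδ : ∀ q ∈ S, 0 < δ q := fun q ⟨hq, hle⟩ =>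
    (inv_pos.2 (Real.logb_pos one_lt_two (by exact_mod_cast (by omega : 1 < q)))).trans_le hle
  have hΨ0 : ∀ q, 0 ≤ Ψ q := Set.indicator_nonneg fun q hq => div_nonneg (hψ0 q) (hδ q hq).le
  have hΨ : Ψ ≤ fun q => 9 * C / (q * (logLog q : ℝ) ^ 2) :=
    Set.indicator_le' (fun q hq => div_le_of_inv_logb_le hC.le hq.1 (hψ0 q) hq.2
      (hO q (by linarith [hq.1]))) fun q _ => by positivity
  have hae : ∀ᵐ x, {q : ℕ | 0 < q ∧ dnint (q * x - γ₁) * δ q < ψ q}.Infinite := by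
    filter_upwards [hγ₁.ae_mem_limsup_approxSet (by positivity) hΨ0 hΨ
      (not_summable_indicator_of_tendsto_sum_filter hdiv 4)] with x hx
    rw [mem_limsup_iff_frequently_mem, Nat.frequently_atTop_iff_infinite] at hx
    refine hx.mono fun q (hq : dnint (q * x - γ₁) < Ψ q) => ?_
    have hqS : q ∈ S := Set.mem_of_indicator_ne_zero ((dnint_nonneg _).trans_lt hq).ne'
    rw [show Ψ q = ψ q / δ q from Set.indicator_of_mem hqS _, lt_div_iff₀ (hδ q hqS)] at hq
    exact ⟨by linarith [hqS.1], hq⟩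
  calc volume {x ∈ Set.Icc (0 : ℝ) 1 | _} = volume (Set.Icc (0 : ℝ) 1) :=
        measure_congr (hae.mono fun x hx => propext (and_iff_left hx))
    _ = 1 := by simp

open Classical in
theorem stmt2 (γ₁ : ℝ) (hγ₁ : Irrational γ₁) (htame : TamelyLiouville γ₁)
    (γ₂ β : ℝ) (hβ : Irrational β)
    (ψ : ℕ → ℝ) (hψ0 : ∀ q, 0 ≤ ψ q)
    (hO : ∃ C > (0:ℝ), ∀ q : ℕ, 3 ≤ q →
      ψ q ≤ C / ((q : ℝ) * Real.logb 2 q * (Real.logb 2 (Real.logb 2 q)) ^ 2))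
    (hdiv : Tendsto (fun Q : ℕ => ∑ q ∈ (Finset.Icc 1 Q).filter
        (fun q : ℕ => (Real.logb 2 q)⁻¹ ≤ dnint (q * β - γ₂)),
        ψ q / dnint ((q : ℝ) * β - γ₂)) atTop atTop) :
    volume {x ∈ Set.Icc (0:ℝ) 1 |
      {q : ℕ | 0 < q ∧ dnint (q * x - γ₁) * dnint (q * β - γ₂) < ψ q}.Infinite} = 1 :=
  stmt2_general γ₁ (htame.quasipolyDiophantine hγ₁) (fun q => dnint (q * β - γ₂)) ψ hψ0 hO hdiv
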